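/- Let k ∈ (0,1) and suppose p and q are coprime positive integers with 4(k⁴ − k² + 1) = p/q. Then for every n ∈ ℕ there exists an integer a with q^n · I_{2n}^+ = a and a ≡ (4p)^n (mod 10). -/

import Mathlib

/-!
Write `K = K(k)`, `L = K'`, `α = π / (K - iL)`, `κ = α K`, and consider the elliptic function
`F(u) = -α ∑_{l ∈ ℤ} 1 / sin (α u - (2l+1) κ)` (`momentGen`). The theorem is a statement about the
Taylor coefficients of `F` at `0`, and rests on three facts.

*The moments are Taylor coefficients.* After `x = s²`, the moment `I_N⁺` is the integral of
`s^(2N+1) / (cos Ks + cosh Ls)` along the boundary of the first quadrant. The residue theorem turns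
it into a sum over the poles `(2m+1) α` (`tendsto_moment`), and the Fourier expansion of `F` has the
same terms (`tendsto_iteratedDeriv_cscSum`). Hence `F^(2N+1)(0) = (-1)^N I_N⁺`
(`momentGen_iteratedDeriv_odd`), while the even derivatives vanish.

*`F` solves an explicit differential equation.* For some constant `B` the defect
`F'' - B F - 2 F³` is entire and doubly periodic up to sign, hence constant by Liouville, hence zero
(`cscSum_ode`). On the real segment `[0, K)` the function `F` is real and blows up at `K`;
`-i F(i ·)` is real on `[0, L)` and blows up at `L`. An increasing solution of
`y' ^ 2 = a² (1 + b y² + y⁴)` with `y(0) = 0` and `b = 2 (1 - 2 k²)` blows up exactly at `K(k) / a`,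
and the blow-up time is monotone in `b`. Rotating by `i` replaces `b` by `-b` and `k` by `k'`, so the
two known blow-up times leave only
`F'(0) = 1` and `B = 2 (1 - 2 k²)` (`momentGen_params`). Therefore `F' ^ 2 = 1 + 2 λ F² + F⁴` with
`λ = 1 - 2 k²`. No identification of `F` with a Jacobi elliptic function is needed.

*The recursion modulo 10.* The hypothesis on `k` reads `q λ² = p - 3q`. The equation for `F` gives a
linear recursion, polynomial in `λ` with integer coefficients, for the odd derivatives at `0` of
`F^(2i+1) / (2i+1)!`. Two steps of it multiply `q^n F^(4n+1)(0)` by `4p` up to multiples of `10`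
(`alg_step`, `taylor_mod_ten`).
-/

section

open MeasureTheory Real

/-- The complete elliptic integral of the first kind `K(k)`. -/
noncomputable def ellipticK (k : ℝ) : ℝ :=
  ∫ θ in (0 : ℝ)..(π / 2), (1 - k ^ 2 * Real.sin θ ^ 2) ^ (-(1 / 2) : ℝ)

/-- Kuznetsov's moment integral `I_n^+`, realizing
`(1/2)∫_ℝ x^n dx/(cos(√x K) + cosh(√x K'))` with `√x = i√(−x)` for `x < 0`. -/
noncomputable def Iplus (k : ℝ) (n : ℕ) : ℝ :=
  (1 / 2) * (∫ x in Set.Ioi (0 : ℝ), x ^ n /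
      (Real.cos (ellipticK k * Real.sqrt x) +
        Real.cosh (ellipticK (Real.sqrt (1 - k ^ 2)) * Real.sqrt x)))
  + ((-1 : ℝ) ^ n / 2) * (∫ x in Set.Ioi (0 : ℝ), x ^ n /
      (Real.cosh (ellipticK k * Real.sqrt x) +
        Real.cos (ellipticK (Real.sqrt (1 - k ^ 2)) * Real.sqrt x)))

/-- Kuznetsov's moment integral `I_n^−`, realizing
`∫_ℝ x^{n+1} dx/(cos(√x K) − cosh(√x K'))` with `√x = i√(−x)` for `x < 0`. -/
noncomputable def Iminus (k : ℝ) (n : ℕ) : ℝ :=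
  (∫ x in Set.Ioi (0 : ℝ), x ^ (n + 1) /
      (Real.cos (ellipticK k * Real.sqrt x) -
        Real.cosh (ellipticK (Real.sqrt (1 - k ^ 2)) * Real.sqrt x)))
  + (-1 : ℝ) ^ (n + 1) * (∫ x in Set.Ioi (0 : ℝ), x ^ (n + 1) /
      (Real.cosh (ellipticK k * Real.sqrt x) -
        Real.cos (ellipticK (Real.sqrt (1 - k ^ 2)) * Real.sqrt x)))

end

/-! ### Blow-up times and the complete elliptic integral -/

section

open MeasureTheory Real Filter Topology

theorem one_sub_pos {k : ℝ} (hk : k ∈ Set.Ioo (0 : ℝ) 1) (θ : ℝ) :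
    0 < 1 - k ^ 2 * Real.sin θ ^ 2 := by
  have h1 : k ^ 2 < 1 := by nlinarith [hk.1, hk.2]
  have h2 := Real.sin_sq_le_one θ
  nlinarith [sq_nonneg k, sq_nonneg (Real.sin θ)]

theorem continuous_integrand {k : ℝ} (hk : k ∈ Set.Ioo (0 : ℝ) 1) :
    Continuous fun θ : ℝ => (1 - k ^ 2 * Real.sin θ ^ 2) ^ (-(1 / 2) : ℝ) :=
  Continuous.rpow_const (by fun_prop) fun θ => Or.inl (one_sub_pos hk θ).ne'

theorem ellipticK_pos {k : ℝ} (hk : k ∈ Set.Ioo (0 : ℝ) 1) : 0 < ellipticK k := by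
  apply intervalIntegral.intervalIntegral_pos_of_pos
  · exact (continuous_integrand hk).intervalIntegrable _ _
  · exact fun θ => Real.rpow_pos_of_pos (one_sub_pos hk θ) _
  · positivity

/-- The elliptic integral `∫₀^z dt / √(1 + 2 (1 - 2 k²) t² + t⁴)`, written through the
substitution `t = tan (θ / 2)` as half of an incomplete elliptic integral of the first kind. It is the
inverse function of the solution of the normalised equation, and tends to `K(k)` as `z → ∞`. -/
noncomputable def invF (k z : ℝ) : ℝ :=
  (1 / 2) * ∫ θ in (0 : ℝ)..(2 * Real.arctan z), (1 - k ^ 2 * Real.sin θ ^ 2) ^ (-(1 / 2) : ℝ)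

theorem quartic_pos {k : ℝ} (hk : k ∈ Set.Ioo (0 : ℝ) 1) (z : ℝ) :
    0 < 1 + 2 * (1 - 2 * k ^ 2) * z ^ 2 + z ^ 4 := by
  have h1 : k ^ 2 < 1 := by nlinarith [hk.1, hk.2]
  have : 1 + 2 * (1 - 2 * k ^ 2) * z ^ 2 + z ^ 4
    = (1 - z ^ 2) ^ 2 + 4 * (1 - k ^ 2) * z ^ 2 := by ring
  rw [this]
  rcases eq_or_ne z 0 with rfl | hz
  · norm_num
  · have : 0 < z ^ 2 := by positivity
    nlinarith [sq_nonneg (1 - z ^ 2)]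

theorem hasDerivAt_invF {k : ℝ} (hk : k ∈ Set.Ioo (0 : ℝ) 1) (z : ℝ) :
    HasDerivAt (invF k) (1 / √(1 + 2 * (1 - 2 * k ^ 2) * z ^ 2 + z ^ 4)) z := by
  have hc := continuous_integrand hk
  have h1 : HasDerivAt (fun φ => ∫ θ in (0 : ℝ)..φ, (1 - k ^ 2 * Real.sin θ ^ 2) ^ (-(1 / 2) : ℝ))
      _ (2 * Real.arctan z) :=
    intervalIntegral.integral_hasDerivAt_right (hc.intervalIntegrable _ _)
      (hc.stronglyMeasurableAtFilter _ _) hc.continuousAt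
  have h2 : HasDerivAt (fun z => 2 * Real.arctan z) (2 * (1 / (1 + z ^ 2))) z :=
    (Real.hasDerivAt_arctan z).const_mul 2
  have h3 := (h1.comp z h2).const_mul (1 / 2)
  refine h3.congr_deriv ?_
  have hz : (0 : ℝ) < 1 + z ^ 2 := by positivity
  have hs : Real.sin (2 * Real.arctan z) = 2 * z / (1 + z ^ 2) := by
    rw [Real.sin_two_mul, Real.sin_arctan, Real.cos_arctan]
    have : √(1 + z ^ 2) ^ 2 = 1 + z ^ 2 := Real.sq_sqrt hz.le
    have h0 : √(1 + z ^ 2) ≠ 0 := by positivity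
    field_simp
    rw [this]
  have hq : 1 - k ^ 2 * Real.sin (2 * Real.arctan z) ^ 2
      = (1 + 2 * (1 - 2 * k ^ 2) * z ^ 2 + z ^ 4) / (1 + z ^ 2) ^ 2 := by
    rw [hs]
    field_simp
    ring
  rw [hq, Real.rpow_neg (div_pos (quartic_pos hk z) (by positivity)).le, ← Real.sqrt_eq_rpow,
    Real.sqrt_div (quartic_pos hk z).le, Real.sqrt_sq hz.le]
  have : √(1 + 2 * (1 - 2 * k ^ 2) * z ^ 2 + z ^ 4) ≠ 0 := (Real.sqrt_pos.2 (quartic_pos hk z)).ne'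
  field_simp

theorem invF_zero (k : ℝ) : invF k 0 = 0 := by simp [invF]

/-- The upper limit of integration tends to `π`, and the integral over `[0, π]` is `2 K(k)`
by symmetry about `π / 2`. -/
theorem tendsto_invF {k : ℝ} (hk : k ∈ Set.Ioo (0 : ℝ) 1) :
    Tendsto (invF k) atTop (𝓝 (ellipticK k)) := by
  have hc := continuous_integrand hk
  have hcont : Continuous fun φ => (1 / 2) * ∫ θ in (0 : ℝ)..(2 * φ),
      (1 - k ^ 2 * Real.sin θ ^ 2) ^ (-(1 / 2) : ℝ) :=
    continuous_const.mul ((intervalIntegral.continuous_primitive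
      (fun a b => hc.intervalIntegrable a b) 0).comp (continuous_const.mul continuous_id))
  have h := (hcont.tendsto (π / 2)).comp (Real.tendsto_arctan_atTop.mono_right nhdsWithin_le_nhds)
  have e : (1 / 2) * ∫ θ in (0 : ℝ)..(2 * (π / 2)), (1 - k ^ 2 * Real.sin θ ^ 2) ^ (-(1 / 2) : ℝ)
      = ellipticK k := by
    have h1 := intervalIntegral.integral_add_adjacent_intervals (hc.intervalIntegrable 0 (π / 2))
      (hc.intervalIntegrable (π / 2) π) (μ := volume)
    have h2 : ∫ θ in (π / 2)..π, (1 - k ^ 2 * Real.sin θ ^ 2) ^ (-(1 / 2) : ℝ) = ellipticK k := by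
      have := intervalIntegral.integral_comp_sub_left (a := 0) (b := π / 2)
        (fun θ => (1 - k ^ 2 * Real.sin θ ^ 2) ^ (-(1 / 2) : ℝ)) π
      simp only [Real.sin_pi_sub, sub_zero] at this
      rw [show π - π / 2 = π / 2 by ring] at this
      rw [← this, ellipticK]
    rw [mul_div_cancel₀ _ (two_ne_zero), ← h1, h2, ← ellipticK]
    ring
  rw [e] at h
  exact h

section blowup
variable {k a b T : ℝ} {y y' : ℝ → ℝ}

/-- A smaller coefficient `b` delays the blow-up: `a x - invF k (y x)` is monotone. The
derivative `y'` may change sign here, since only its upper bound matters. -/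
theorem ellipticK_le_of_blowup (hk : k ∈ Set.Ioo (0 : ℝ) 1) (ha : 0 < a) (hT : 0 < T)
    (hy : ∀ x ∈ Set.Ico 0 T, HasDerivAt y (y' x) x) (y0 : y 0 = 0)
    (hlim : Tendsto y (𝓝[<] T) atTop)
    (hode : ∀ x ∈ Set.Ico 0 T, y' x ^ 2 = a ^ 2 * (1 + b * y x ^ 2 + y x ^ 4))
    (hb : b ≤ 2 * (1 - 2 * k ^ 2)) : ellipticK k ≤ a * T := by
  have hd : ∀ x ∈ Set.Ico 0 T, HasDerivAt (fun x => a * x - invF k (y x))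
      (a * 1 - 1 / √(1 + 2 * (1 - 2 * k ^ 2) * y x ^ 2 + y x ^ 4) * y' x) x := fun x hx =>
    ((hasDerivAt_id x).const_mul a).sub ((hasDerivAt_invF hk (y x)).comp x (hy x hx))
  have hmono : MonotoneOn (fun x => a * x - invF k (y x)) (Set.Ico 0 T) := by
    apply monotoneOn_of_deriv_nonneg (convex_Ico 0 T)
    · exact fun x hx => (hd x hx).continuousAt.continuousWithinAt
    · exact fun x hx => (hd x (interior_subset hx)).differentiableAt.differentiableWithinAt
    · intro x hx
      rw [(hd x (interior_subset hx)).deriv]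
      have hq := quartic_pos hk (y x)
      have h1 := hode x (interior_subset hx)
      have h2 : y' x ≤ a * √(1 + 2 * (1 - 2 * k ^ 2) * y x ^ 2 + y x ^ 4) := by
        apply abs_le_of_sq_le_sq' _ (by positivity) |>.2
        rw [h1, mul_pow, Real.sq_sqrt hq.le]
        have : b * y x ^ 2 ≤ 2 * (1 - 2 * k ^ 2) * y x ^ 2 := by gcongr
        gcongr
      have h3 := Real.sqrt_pos.2 hq
      rw [one_div, mul_one, sub_nonneg, inv_mul_le_iff₀ h3, mul_comm]
      exact h2
  have hl : Tendsto (fun x => a * x - invF k (y x)) (𝓝[<] T) (𝓝 (a * T - ellipticK k)) :=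
    ((tendsto_id.mono_left nhdsWithin_le_nhds).const_mul a).sub ((tendsto_invF hk).comp hlim)
  have := ge_of_tendsto hl (b := 0) (by
    filter_upwards [Ioo_mem_nhdsLT hT] with x hx
    have := hmono (Set.left_mem_Ico.2 hT) (Set.Ioo_subset_Ico_self hx) hx.1.le
    simpa [y0, invF_zero] using this)
  linarith

/-- A larger coefficient `b` advances the blow-up, strictly if `b` is strictly larger. Here
the quartic has no real zero, so `y'` keeps its sign and is the positive square root. -/
theorem le_ellipticK_of_blowup (hk : k ∈ Set.Ioo (0 : ℝ) 1) (ha : 0 < a) (hT : 0 < T)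
    (hy : ∀ x ∈ Set.Ico 0 T, HasDerivAt y (y' x) x) (y0 : y 0 = 0)
    (hy' : ContinuousOn y' (Set.Ico 0 T)) (hy'0 : 0 < y' 0)
    (hlim : Tendsto y (𝓝[<] T) atTop)
    (hode : ∀ x ∈ Set.Ico 0 T, y' x ^ 2 = a ^ 2 * (1 + b * y x ^ 2 + y x ^ 4))
    (hb : 2 * (1 - 2 * k ^ 2) ≤ b) :
    a * T ≤ ellipticK k ∧ (2 * (1 - 2 * k ^ 2) < b → a * T < ellipticK k) := by
  have hd : ∀ x ∈ Set.Ico 0 T, HasDerivAt (fun x => invF k (y x) - a * x)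
      (1 / √(1 + 2 * (1 - 2 * k ^ 2) * y x ^ 2 + y x ^ 4) * y' x - a * 1) x := fun x hx =>
    ((hasDerivAt_invF hk (y x)).comp x (hy x hx)).sub ((hasDerivAt_id x).const_mul a)
  have hne : ∀ x ∈ Set.Ico 0 T, y' x ≠ 0 := by
    intro x hx h0
    have h1 := hode x hx
    have hq := quartic_pos hk (y x)
    have : 2 * (1 - 2 * k ^ 2) * y x ^ 2 ≤ b * y x ^ 2 := by gcongr
    have : 0 < a ^ 2 * (1 + b * y x ^ 2 + y x ^ 4) := by
      apply mul_pos (by positivity)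
      linarith
    rw [h0] at h1
    norm_num at h1
    rcases h1 with h1 | h1
    · exact ha.ne' h1
    · rw [h1] at this
      simp at this
  have hpos : ∀ x ∈ Set.Ico 0 T, 0 < y' x := by
    intro x hx
    by_contra hneg
    obtain ⟨c, hc, hc0⟩ := intermediate_value_Icc' hx.1
      (hy'.mono (Set.Icc_subset_Ico_right hx.2)) ⟨not_lt.1 hneg, hy'0.le⟩
    exact hne c ⟨hc.1, hc.2.trans_lt hx.2⟩ hc0
  have hyc : ContinuousOn y (Set.Ico 0 T) := fun x hx =>
    (hy x hx).continuousAt.continuousWithinAt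
  have hymono : StrictMonoOn y (Set.Ico 0 T) := by
    apply strictMonoOn_of_deriv_pos (convex_Ico 0 T) hyc
    intro x hx
    rw [(hy x (interior_subset hx)).deriv]
    exact hpos x (interior_subset hx)
  have hcont : ContinuousOn (fun x => invF k (y x) - a * x) (Set.Ico 0 T) := fun x hx =>
    (hd x hx).continuousAt.continuousWithinAt
  have key : ∀ x ∈ Set.Ico 0 T, y' x = a * √(1 + b * y x ^ 2 + y x ^ 4) := by
    intro x hx
    have hq := quartic_pos hk (y x)
    have : 2 * (1 - 2 * k ^ 2) * y x ^ 2 ≤ b * y x ^ 2 := by gcongr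
    rw [← abs_of_pos (hpos x hx), ← Real.sqrt_sq_eq_abs, hode x hx,
      Real.sqrt_mul (by positivity), Real.sqrt_sq ha.le]
  have hmono : MonotoneOn (fun x => invF k (y x) - a * x) (Set.Ico 0 T) := by
    apply monotoneOn_of_deriv_nonneg (convex_Ico 0 T) hcont
    · exact fun x hx => (hd x (interior_subset hx)).differentiableAt.differentiableWithinAt
    · intro x hx
      rw [(hd x (interior_subset hx)).deriv, key x (interior_subset hx)]
      have h3 := Real.sqrt_pos.2 (quartic_pos hk (y x))
      rw [one_div, mul_one, sub_nonneg, le_inv_mul_iff₀ h3, mul_comm]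
      gcongr
  have hl : Tendsto (fun x => invF k (y x) - a * x) (𝓝[<] T) (𝓝 (ellipticK k - a * T)) :=
    ((tendsto_invF hk).comp hlim).sub ((tendsto_id.mono_left nhdsWithin_le_nhds).const_mul a)
  have h2T : T / 2 ∈ Set.Ico 0 T := ⟨by linarith, by linarith⟩
  have h0T : (0 : ℝ) ∈ Set.Ico 0 T := Set.left_mem_Ico.2 hT
  have hge := ge_of_tendsto hl (b := invF k (y (T / 2)) - a * (T / 2)) (by
    filter_upwards [Ioo_mem_nhdsLT (show T / 2 < T by linarith)] with x hx
    exact hmono h2T ⟨by linarith [hx.1], hx.2⟩ hx.1.le)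
  constructor
  · have := hmono h0T h2T h2T.1
    simp only [y0, invF_zero, mul_zero, sub_zero] at this
    linarith
  · intro hb'
    have hs : StrictMonoOn (fun x => invF k (y x) - a * x) (Set.Ico 0 T) := by
      apply strictMonoOn_of_deriv_pos (convex_Ico 0 T) hcont
      intro x hx
      have hx' := interior_subset hx
      rw [interior_Ico] at hx
      rw [(hd x hx').deriv, key x hx']
      have h3 := Real.sqrt_pos.2 (quartic_pos hk (y x))
      have hyx : 0 < y x := y0 ▸ hymono h0T hx' hx.1
      rw [one_div, mul_one, sub_pos, lt_inv_mul_iff₀ h3, mul_comm]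
      have hq := (quartic_pos hk (y x)).le
      gcongr
    have := hs h0T h2T (by linarith)
    simp only [y0, invF_zero, mul_zero, sub_zero] at this
    linarith

end blowup

end

/-! ### Taylor coefficients modulo 10 -/

section

open Filter Topology

/-- The arithmetic of the recursion satisfied by the normalised odd derivatives
`b n i = (f^(2i+1))^(2n+1)(0) / (2i+1)!` of a solution of `f' ^ 2 = 1 + 2 λ f² + f⁴`. In even rows
`q^n b` is an integer in the even columns and `λ q` times an integer in the odd ones; in odd rows
`λ` sits in the even columns instead. The squares `λ²` that arise are absorbed through
`q λ² = p - 3q`, at the cost of one factor `q` for every two steps. -/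
theorem alg_step (b : ℕ → ℕ → ℂ) (lam : ℂ) (p q : ℤ)
    (hlam : (q : ℂ) * lam ^ 2 = p - 3 * q)
    (b00 : b 0 0 = 1) (b0 : ∀ i, b 0 (i + 1) = 0)
    (r0 : ∀ n, b (n + 1) 0 = 2 * lam * b n 0 + 12 * b n 1)
    (r : ∀ n i, b (n + 1) (i + 1) = b n i + 2 * lam * (2 * i + 3) ^ 2 * b n (i + 1)
      + (2 * i + 3) * (2 * i + 4) ^ 2 * (2 * i + 5) * b n (i + 2)) (n : ℕ) :
    ∃ A : ℕ → ℤ, (∀ i, (q : ℂ) ^ n * b (2 * n) (2 * i) = A (2 * i)) ∧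
      (∀ i, (q : ℂ) ^ n * b (2 * n) (2 * i + 1) = lam * q * A (2 * i + 1)) ∧
      A 0 ≡ (4 * p) ^ n [ZMOD 10] := by
  induction n with
  | zero =>
    refine ⟨fun i => if i = 0 then 1 else 0, ?_, ?_, by simp⟩
    · rintro (_ | i)
      · simp [b00]
      · simp [show 2 * (i + 1) = (2 * i + 1) + 1 by ring, b0]
    · intro i
      simp [b0]
  | succ n ih =>
    obtain ⟨A, hE, hO, hA⟩ := ih
    -- The intermediate (odd) step: `q ^ n * b (2n+1) i` is `lam * A' i` or `A' i`.
    let A' : ℕ → ℤ := fun i => match i with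
      | 0 => 2 * A 0 + 12 * q * A 1
      | i + 1 => if Even i then
          A i + 2 * (2 * i + 3) ^ 2 * (p - 3 * q) * A (i + 1)
            + (2 * i + 3) * (2 * i + 4) ^ 2 * (2 * i + 5) * A (i + 2)
        else q * A i + 2 * (2 * i + 3) ^ 2 * A (i + 1)
            + (2 * i + 3) * (2 * i + 4) ^ 2 * (2 * i + 5) * q * A (i + 2)
    have hE' : ∀ i, (q : ℂ) ^ n * b (2 * n + 1) (2 * i) = lam * A' (2 * i) := by
      rintro (_ | i)
      · have h1 := hE 0
        have h2 := hO 0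
        simp only [mul_zero, zero_add] at h1 h2 ⊢
        rw [r0]
        simp only [A']
        push_cast
        linear_combination 2 * lam * h1 + 12 * h2
      · have h1 := hO i
        have h2 := hE (i + 1)
        have h3 := hO (i + 1)
        have e : 2 * (i + 1) = (2 * i + 1) + 1 := by ring
        have e3 : 2 * (i + 1) + 1 = (2 * i + 1) + 2 := by ring
        rw [e3] at h3
        rw [e] at h2 ⊢
        rw [r]
        have : ¬ Even (2 * i + 1) := by simp
        simp only [A', this, if_false]
        push_cast
        linear_combination h1 + 2 * lam * (2 * (2 * i + 1) + 3) ^ 2 * h2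
          + (2 * (2 * i + 1) + 3) * (2 * (2 * i + 1) + 4) ^ 2 * (2 * (2 * i + 1) + 5) * h3
    have hO' : ∀ i, (q : ℂ) ^ n * b (2 * n + 1) (2 * i + 1) = A' (2 * i + 1) := by
      intro i
      have h1 := hE i
      have h2 := hO i
      have h3 := hE (i + 1)
      have e : 2 * (i + 1) = (2 * i) + 2 := by ring
      rw [e] at h3
      rw [r]
      have : Even (2 * i) := by simp
      simp only [A', this, if_true]
      push_cast
      linear_combination h1 + 2 * lam * (2 * (2 * i) + 3) ^ 2 * h2
          + (2 * (2 * i) + 3) * (2 * (2 * i) + 4) ^ 2 * (2 * (2 * i) + 5) * h3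
          + 2 * (2 * (2 * i) + 3) ^ 2 * A (2 * i + 1) * hlam
    let A'' : ℕ → ℤ := fun i => match i with
      | 0 => 2 * (p - 3 * q) * A' 0 + 12 * q * A' 1
      | i + 1 => if Even i then
          A' i + 2 * (2 * i + 3) ^ 2 * A' (i + 1)
            + (2 * i + 3) * (2 * i + 4) ^ 2 * (2 * i + 5) * A' (i + 2)
        else q * A' i + 2 * (2 * i + 3) ^ 2 * (p - 3 * q) * A' (i + 1)
            + (2 * i + 3) * (2 * i + 4) ^ 2 * (2 * i + 5) * q * A' (i + 2)
    have e2 : 2 * (n + 1) = (2 * n + 1) + 1 := by ring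
    refine ⟨A'', ?_, ?_, ?_⟩
    · rw [e2]
      rintro (_ | i)
      · have h1 := hE' 0
        have h2 := hO' 0
        simp only [mul_zero, zero_add] at h1 h2 ⊢
        rw [r0]
        simp only [A'']
        push_cast
        linear_combination 2 * lam * q * h1 + 12 * q * h2 + 2 * A' 0 * hlam
      · have h1 := hO' i
        have h2 := hE' (i + 1)
        have h3 := hO' (i + 1)
        have e : 2 * (i + 1) = (2 * i + 1) + 1 := by ring
        have e3 : 2 * (i + 1) + 1 = (2 * i + 1) + 2 := by ring
        rw [e3] at h3
        rw [e] at h2 ⊢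
        rw [r]
        have : ¬ Even (2 * i + 1) := by simp
        simp only [A'', this, if_false]
        push_cast
        linear_combination q * h1 + 2 * lam * q * (2 * (2 * i + 1) + 3) ^ 2 * h2
          + q * (2 * (2 * i + 1) + 3) * (2 * (2 * i + 1) + 4) ^ 2 * (2 * (2 * i + 1) + 5) * h3
          + 2 * (2 * (2 * i + 1) + 3) ^ 2 * A' (2 * i + 1 + 1) * hlam
    · rw [e2]
      intro i
      have h1 := hE' i
      have h2 := hO' i
      have h3 := hE' (i + 1)
      have e : 2 * (i + 1) = (2 * i) + 2 := by ring
      rw [e] at h3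
      rw [r]
      have : Even (2 * i) := by simp
      simp only [A'', this, if_true]
      push_cast
      linear_combination q * h1 + q * 2 * lam * (2 * (2 * i) + 3) ^ 2 * h2
          + q * (2 * (2 * i) + 3) * (2 * (2 * i) + 4) ^ 2 * (2 * (2 * i) + 5) * h3
    -- The factor `4 p` is `4 (p - 3q) + 12 q`; all other contributions are divisible by `10`.
    · have h : A'' 0 = 4 * p * A 0 + 10 * (24 * q * (p - 3 * q) * A 1 + 288 * q * A 2) := by
        have h0 : A' 0 = 2 * A 0 + 12 * q * A 1 := rfl
        have h1 : A' 1 = A 0 + 18 * (p - 3 * q) * A 1 + 240 * A 2 := by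
          simp [A']
        simp only [A'', h0, h1]
        ring
      rw [h, pow_succ', Int.modEq_iff_dvd]
      have := (hA.mul_left (4 * p)).dvd
      obtain ⟨c, hc⟩ := this
      exact ⟨c - (24 * q * (p - 3 * q) * A 1 + 288 * q * A 2), by linarith⟩

theorem deriv_pow_ode {f : ℂ → ℂ} (hf : AnalyticAt ℂ f 0) {lam : ℂ}
    (hode : ∀ᶠ u in 𝓝 (0 : ℂ), deriv (deriv f) u = 2 * lam * f u + 2 * f u ^ 3)
    (hode1 : ∀ᶠ u in 𝓝 (0 : ℂ), deriv f u ^ 2 = 1 + 2 * lam * f u ^ 2 + f u ^ 4) (j : ℕ) :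
    deriv (deriv (fun u => f u ^ (j + 2))) =ᶠ[𝓝 0] fun u =>
      ((j + 2) * (j + 1)) * f u ^ j + 2 * lam * (j + 2) ^ 2 * f u ^ (j + 2)
        + (j + 2) * (j + 3) * f u ^ (j + 4) := by
  have hd : deriv (fun u => f u ^ (j + 2)) =ᶠ[𝓝 0] fun u => (j + 2) * f u ^ (j + 1) * deriv f u := by
    filter_upwards [hf.eventually_analyticAt] with u hu
    rw [deriv_fun_pow hu.differentiableAt]
    push_cast
    simp
  have := hd.deriv
  refine this.trans ?_
  filter_upwards [hf.eventually_analyticAt, hode, hode1] with u hu h2 h1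
  have e := ((hu.differentiableAt.hasDerivAt.fun_pow (j + 1)).const_mul ((j : ℂ) + 2)).fun_mul
    hu.deriv.differentiableAt.hasDerivAt
  rw [e.deriv, h2]
  push_cast
  linear_combination ((j + 2) * (j + 1)) * f u ^ j * h1

/-- The derivatives of order `4n+1` at `0` of the solution of the normalised
equation satisfy the congruence of the theorem. -/
theorem taylor_mod_ten {f : ℂ → ℂ} (hf : AnalyticAt ℂ f 0) (h0 : f 0 = 0) (h1 : deriv f 0 = 1)
    {lam : ℂ}
    (hode : ∀ᶠ u in 𝓝 (0 : ℂ), deriv (deriv f) u = 2 * lam * f u + 2 * f u ^ 3)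
    (hode1 : ∀ᶠ u in 𝓝 (0 : ℂ), deriv f u ^ 2 = 1 + 2 * lam * f u ^ 2 + f u ^ 4)
    (p q : ℤ) (hlam : (q : ℂ) * lam ^ 2 = p - 3 * q) (n : ℕ) :
    ∃ a : ℤ, (q : ℂ) ^ n * iteratedDeriv (4 * n + 1) f 0 = a ∧ a ≡ (4 * p) ^ n [ZMOD 10] := by
  let b : ℕ → ℕ → ℂ := fun n i =>
    iteratedDeriv (2 * n + 1) (fun u => f u ^ (2 * i + 1)) 0 / (2 * i + 1).factorial
  have step : ∀ n (g : ℂ → ℂ), iteratedDeriv (2 * (n + 1) + 1) g 0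
      = iteratedDeriv (2 * n + 1) (deriv (deriv g)) 0 := by
    intro n g
    rw [show 2 * (n + 1) + 1 = (2 * n + 1) + 1 + 1 by ring, iteratedDeriv_succ',
      iteratedDeriv_succ']
  have cd : ∀ j (m : ℕ), ContDiffAt ℂ m (fun u => f u ^ j) 0 := fun j m =>
    (hf.fun_pow j).contDiffAt
  obtain ⟨A, hE, -, hA⟩ := alg_step b lam p q hlam (by simp [b, h1])
    (by
      intro i
      simp only [b, mul_zero, zero_add, iteratedDeriv_one]
      rw [deriv_fun_pow hf.differentiableAt, h0]
      simp)
    (by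
      intro n
      simp only [b]
      rw [step]
      have : deriv (deriv fun u => f u ^ (2 * 0 + 1)) =ᶠ[𝓝 0]
          fun u => 2 * lam * f u ^ 1 + 2 * f u ^ 3 := by
        filter_upwards [hode] with u hu
        simpa using hu
      rw [this.iteratedDeriv_eq, iteratedDeriv_fun_add (contDiffAt_const.mul (cd _ _)) (contDiffAt_const.mul (cd _ _)),
        iteratedDeriv_const_mul_field, iteratedDeriv_const_mul_field]
      simp [Nat.factorial]
      ring)
    (by
      intro n i
      simp only [b]
      rw [step]
      have := deriv_pow_ode hf hode hode1 (2 * i + 1)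
      rw [show 2 * (i + 1) + 1 = 2 * i + 1 + 2 by ring, this.iteratedDeriv_eq,
        iteratedDeriv_fun_add ((contDiffAt_const.mul (cd _ _)).add (contDiffAt_const.mul (cd _ _)))
          (contDiffAt_const.mul (cd _ _)),
        iteratedDeriv_fun_add (contDiffAt_const.mul (cd _ _)) (contDiffAt_const.mul (cd _ _)),
        iteratedDeriv_const_mul_field, iteratedDeriv_const_mul_field,
        iteratedDeriv_const_mul_field, show 2 * (i + 2) + 1 = 2 * i + 1 + 4 by ring]
      generalize iteratedDeriv (2 * n + 1) (fun u => f u ^ (2 * i + 1)) 0 = x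
      generalize iteratedDeriv (2 * n + 1) (fun u => f u ^ (2 * i + 1 + 2)) 0 = y
      generalize iteratedDeriv (2 * n + 1) (fun u => f u ^ (2 * i + 1 + 4)) 0 = z
      have hfac : ((2 * i + 1).factorial : ℂ) ≠ 0 := by exact_mod_cast Nat.factorial_ne_zero _
      have c : ∀ k : ℕ, (2 * (i : ℂ) + (k + 1)) ≠ 0 := fun k => by
        exact_mod_cast Nat.succ_ne_zero (2 * i + k)
      have c1 : 2 * (i : ℂ) + 2 ≠ 0 := by convert c 1 using 2; norm_num
      have c2 : 2 * (i : ℂ) + 3 ≠ 0 := by convert c 2 using 2; norm_num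
      have c3 : 2 * (i : ℂ) + 4 ≠ 0 := by convert c 3 using 2; norm_num
      have c4 : 2 * (i : ℂ) + 5 ≠ 0 := by convert c 4 using 2; norm_num
      have e2 : ((2 * i + 1 + 2).factorial : ℂ)
          = (2 * i + 3) * (2 * i + 2) * (2 * i + 1).factorial := by
        rw [Nat.factorial_succ, Nat.factorial_succ]
        push_cast
        ring
      have e4 : ((2 * i + 1 + 4).factorial : ℂ) = (2 * i + 5) * (2 * i + 4) *
          ((2 * i + 3) * (2 * i + 2) * (2 * i + 1).factorial) := by
        rw [← e2, Nat.factorial_succ, Nat.factorial_succ]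
        push_cast
        ring
      rw [e2, e4]
      push_cast
      rw [show 2 * (i : ℂ) + 1 + 2 = 2 * i + 3 by ring,
        show 2 * (i : ℂ) + 1 + 1 = 2 * i + 2 by ring, show 2 * (i : ℂ) + 1 + 3 = 2 * i + 4 by ring]
      field_simp) n
  refine ⟨A 0, ?_, hA⟩
  have := hE 0
  simpa [b, show 2 * (2 * n) + 1 = 4 * n + 1 by ring] using this

end

/-! ### The residue theorem on a rectangle -/

section

open MeasureTheory Filter Topology Complex

/-- The integral of `f` along the boundary of the rectangle `[0, X] × [0, Y]`, traversed
counterclockwise. -/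
noncomputable def rectInt (X Y : ℝ) (f : ℂ → ℂ) : ℂ :=
  (∫ x in (0 : ℝ)..X, f x) - (∫ x in (0 : ℝ)..X, f (x + Y * I))
    + I * (∫ y in (0 : ℝ)..Y, f (X + y * I)) - I * ∫ y in (0 : ℝ)..Y, f (y * I)

theorem rectInt_eq_zero {X Y : ℝ} (hX : 0 ≤ X) (hY : 0 ≤ Y) {f : ℂ → ℂ}
    (hf : DifferentiableOn ℂ f (Set.Icc 0 X ×ℂ Set.Icc 0 Y)) : rectInt X Y f = 0 := by
  have := Complex.integral_boundary_rect_eq_zero_of_differentiableOn f 0 (X + Y * I)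
    (by simpa [Set.uIcc_of_le hX, Set.uIcc_of_le hY] using hf)
  simpa [rectInt] using this

theorem integral_line_inv (z d : ℂ) (T : ℝ) (hT : 0 ≤ T)
    (h : ∀ t ∈ Set.Icc (0 : ℝ) T, z + t * d ∈ slitPlane) :
    ∫ t in (0 : ℝ)..T, d * (z + t * d)⁻¹ = log (z + T * d) - log z := by
  have hd : ∀ t ∈ Set.uIcc (0 : ℝ) T,
      HasDerivAt (fun t : ℝ => log (z + t * d)) (d * (z + t * d)⁻¹) t := by
    intro t ht
    rw [Set.uIcc_of_le hT] at ht
    have h1 : HasDerivAt (fun t : ℝ => z + (t : ℂ) * d) (1 * d) t :=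
      (((hasDerivAt_id t).ofReal_comp.mul_const d)).const_add z
    have := h1.clog_real (h t ht)
    simpa [div_eq_mul_inv] using this
  rw [intervalIntegral.integral_eq_sub_of_hasDerivAt hd]
  · simp
  · apply ContinuousOn.intervalIntegrable
    apply ContinuousOn.mul continuousOn_const
    apply ContinuousOn.inv₀ (by fun_prop)
    intro t ht
    rw [Set.uIcc_of_le hT] at ht
    exact slitPlane_ne_zero (h t ht)

theorem log_sub_log_neg {z : ℂ} (hz : 0 < z.im) : log z - log (-z) = Real.pi * I := by
  rw [log, log, norm_neg, arg_neg_eq_arg_sub_pi_of_im_pos hz]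
  push_cast
  ring

/-- The winding number of the boundary of the rectangle about an interior point. The four
sides are integrated with branches of the logarithm; on the left side the sign of `z - s` is reversed
so as to stay off the cut. -/
theorem rectInt_inv {X Y : ℝ} {s : ℂ} (h1 : 0 < s.re) (h2 : s.re < X) (h3 : 0 < s.im)
    (h4 : s.im < Y) : rectInt X Y (fun z => (z - s)⁻¹) = 2 * Real.pi * I := by
  have hX : 0 ≤ X := by linarith
  have hY : 0 ≤ Y := by linarith
  have b := integral_line_inv (-s) 1 X hX (by
    intro t _
    right
    simp [h3.ne'])
  have t := integral_line_inv (Y * I - s) 1 X hX (by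
    intro t _
    right
    simp only [add_im, sub_im, mul_im, ofReal_re, ofReal_im, I_re, I_im, one_re, one_im]
    intro h
    linarith)
  have r := integral_line_inv (X - s) I Y hY (by
    intro t _
    left
    simp
    linarith)
  have l := integral_line_inv s (-I) Y hY (by
    intro t _
    left
    simp
    linarith)
  have e1 : (∫ x in (0 : ℝ)..X, ((x : ℂ) - s)⁻¹) = log (X - s) - log (-s) := by
    rw [show (X : ℂ) - s = -s + X * 1 by ring, ← b]
    congr 1 with x
    rw [show (x : ℂ) - s = -s + x * 1 by ring, one_mul]
  have e2 : (∫ x in (0 : ℝ)..X, ((x : ℂ) + Y * I - s)⁻¹) = log (X + Y * I - s) - log (Y * I - s) := by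
    rw [show (X : ℂ) + Y * I - s = Y * I - s + X * 1 by ring, ← t]
    congr 1 with x
    rw [show (x : ℂ) + Y * I - s = Y * I - s + x * 1 by ring, one_mul]
  have e3 : I * (∫ y in (0 : ℝ)..Y, ((X : ℂ) + y * I - s)⁻¹)
      = log (X + Y * I - s) - log (X - s) := by
    rw [show (X : ℂ) + Y * I - s = X - s + Y * I by ring, ← r, ← intervalIntegral.integral_const_mul]
    congr 1 with y
    rw [show (X : ℂ) + y * I - s = X - s + y * I by ring]
  have e4 : I * (∫ y in (0 : ℝ)..Y, ((y : ℂ) * I - s)⁻¹) = log (-(Y * I - s)) - log s := by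
    rw [show -((Y : ℂ) * I - s) = s + Y * -I by ring, ← l, ← intervalIntegral.integral_const_mul]
    congr 1 with y
    rw [show (y : ℂ) * I - s = -(s + y * -I) by ring, inv_neg]
    ring
  have g1 := log_sub_log_neg h3
  have g2 : log (Y * I - s) - log (-(Y * I - s)) = Real.pi * I := log_sub_log_neg (by simp; linarith)
  rw [rectInt, e1, e2, e3, e4]
  linear_combination g1 + g2

/-- The residue theorem on a rectangle for finitely many simple poles. The poles are
removed one at a time: after subtraction of `c s / (z - s)` the singularity at `s` is removable. -/
theorem rectInt_residue {X Y : ℝ} (hX : 0 ≤ X) (hY : 0 ≤ Y) (c : ℂ → ℂ) (S : Finset ℂ) :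
    ∀ f : ℂ → ℂ, (∀ s ∈ S, s ∈ Set.Ioo 0 X ×ℂ Set.Ioo 0 Y) →
    DifferentiableOn ℂ f ((Set.Icc 0 X ×ℂ Set.Icc 0 Y) \ S) →
    (∀ s ∈ S, Tendsto (fun z => (z - s) * f z) (𝓝[≠] s) (𝓝 (c s))) →
    rectInt X Y f = 2 * Real.pi * I * ∑ s ∈ S, c s := by
  classical
  induction S using Finset.induction_on with
  | empty =>
    intro f _ hf _
    simpa using rectInt_eq_zero hX hY (by simpa using hf)
  | insert s S hs ih =>
    intro f hS hf hlim
    have hsm := hS s (Finset.mem_insert_self _ _)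
    obtain ⟨⟨hs1, hs2⟩, hs3, hs4⟩ := hsm
    set g : ℂ → ℂ := fun z => f z - c s * (z - s)⁻¹ with hg
    set g' := Function.update g s (limUnder (𝓝[≠] s) g) with hg'
    set R : Set ℂ := Set.Icc 0 X ×ℂ Set.Icc 0 Y with hR
    have hRn : R \ S ∈ 𝓝 s := by
      refine (Filter.inter_mem ?_ (S.finite_toSet.isClosed.isOpen_compl.mem_nhds (by simpa using hs)))
      exact Filter.mem_of_superset ((isOpen_Ioo.reProdIm isOpen_Ioo).mem_nhds ⟨⟨hs1, hs2⟩, hs3, hs4⟩)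
        (fun z hz => ⟨Set.Ioo_subset_Icc_self hz.1, Set.Ioo_subset_Icc_self hz.2⟩)
    have hgd : DifferentiableOn ℂ g ((R \ S) \ {s}) := by
      apply DifferentiableOn.sub
      · apply hf.mono
        intro z hz
        refine ⟨hz.1.1, ?_⟩
        simp only [Finset.coe_insert, Set.mem_insert_iff, not_or]
        exact ⟨hz.2, hz.1.2⟩
      · apply DifferentiableOn.const_mul
        apply DifferentiableOn.inv (by fun_prop)
        intro z hz
        exact sub_ne_zero.2 hz.2
    have hgl : Tendsto (fun z => (z - s) * g z) (𝓝[≠] s) (𝓝 0) := by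
      have := (hlim s (Finset.mem_insert_self _ _)).sub_const (c s)
      rw [sub_self] at this
      refine this.congr' ?_
      filter_upwards [self_mem_nhdsWithin] with z hz
      have : z - s ≠ 0 := sub_ne_zero.2 hz
      simp only [hg]
      field_simp
    have hgo : (fun z => g z - g s) =o[𝓝[≠] s] fun z => (z - s)⁻¹ := by
      rw [Asymptotics.isLittleO_iff_tendsto']
      · have h2 : Tendsto (fun z => (z - s) * g s) (𝓝[≠] s) (𝓝 0) := by
          have : Tendsto (fun z => (z - s) * g s) (𝓝 s) (𝓝 ((s - s) * g s)) :=
            Continuous.tendsto (by fun_prop) s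
          simpa using this.mono_left nhdsWithin_le_nhds
        have := hgl.sub h2
        rw [sub_zero] at this
        refine this.congr fun z => ?_
        rw [div_inv_eq_mul]
        ring
      · filter_upwards [self_mem_nhdsWithin] with z hz h
        exact absurd (inv_eq_zero.1 h) (sub_ne_zero.2 hz)
    have hg'd := Complex.differentiableOn_update_limUnder_of_isLittleO hRn hgd hgo
    have hS' : ∀ z ∈ S, z ≠ s := fun z hz h => hs (h ▸ hz)
    have key := ih g' (fun z hz => hS z (Finset.mem_insert_of_mem hz)) hg'd (by
      intro z hz
      have h1 := hlim z (Finset.mem_insert_of_mem hz)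
      have h2 : Tendsto (fun u => (u - z) * (c s * (u - s)⁻¹)) (𝓝[≠] z) (𝓝 0) := by
        have : ContinuousAt (fun u => (u - z) * (c s * (u - s)⁻¹)) z := by
          have : z - s ≠ 0 := sub_ne_zero.2 (hS' z hz)
          fun_prop (disch := assumption)
        have := this.tendsto
        rw [sub_self, zero_mul] at this
        exact this.mono_left nhdsWithin_le_nhds
      have h3 := h1.sub h2
      rw [sub_zero] at h3
      refine h3.congr' ?_
      have : ∀ᶠ u in 𝓝 z, u ≠ s := eventually_ne_nhds (hS' z hz)
      filter_upwards [nhdsWithin_le_nhds this] with u hu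
      rw [hg', Function.update_of_ne hu]
      ring)
    -- on the boundary, `f = g' + c s / (z - s)`
    have hfe : ∀ z : ℂ, z ≠ s → f z = g' z + c s * (z - s)⁻¹ := by
      intro z hz
      rw [hg', Function.update_of_ne hz]
      simp [hg]
    have hcont : ∀ (γ : ℝ → ℂ) (T : ℝ), 0 ≤ T → Continuous γ → (∀ t ∈ Set.Icc 0 T, γ t ∈ R) →
        (∀ t, γ t ≠ s) → (∀ t ∈ Set.Icc 0 T, γ t ∉ S) →
        ∫ t in (0 : ℝ)..T, f (γ t) = (∫ t in (0 : ℝ)..T, g' (γ t))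
          + c s * ∫ t in (0 : ℝ)..T, (γ t - s)⁻¹ := by
      intro γ T hT hγ hγR hγs hγS
      rw [← intervalIntegral.integral_const_mul, ← intervalIntegral.integral_add]
      · congr 1 with t
        exact hfe _ (hγs t)
      · apply ContinuousOn.intervalIntegrable
        rw [Set.uIcc_of_le hT]
        exact hg'd.continuousOn.comp hγ.continuousOn fun t ht => ⟨hγR t ht, hγS t ht⟩
      · apply Continuous.intervalIntegrable
        exact continuous_const.mul ((hγ.sub continuous_const).inv₀ fun t => sub_ne_zero.2 (hγs t))
    have hSb : ∀ z ∈ S, 0 < z.re ∧ z.re < X ∧ 0 < z.im ∧ z.im < Y := fun z hz => by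
      obtain ⟨⟨h1, h2⟩, h3, h4⟩ := hS z (Finset.mem_insert_of_mem hz)
      exact ⟨h1, h2, h3, h4⟩
    have i1 := hcont (fun x => x) X hX (by fun_prop)
      (fun t ht => ⟨by simpa using ht, by simp [hY]⟩)
      (fun t h => by rw [← h] at hs3; simp at hs3)
      (fun t _ h => by simpa using (hSb _ h).2.2.1)
    have i2 := hcont (fun x => x + Y * I) X hX (by fun_prop)
      (fun t ht => ⟨by simpa using ht, by simp [hY]⟩)
      (fun t h => by rw [← h] at hs4; simp at hs4)
      (fun t _ h => by simpa using (hSb _ h).2.2.2)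
    have i3 := hcont (fun y => X + y * I) Y hY (by fun_prop)
      (fun t ht => ⟨by simp [hX], by simpa using ht⟩)
      (fun t h => by rw [← h] at hs2; simp at hs2)
      (fun t _ h => by simpa using (hSb _ h).2.1)
    have i4 := hcont (fun y => y * I) Y hY (by fun_prop)
      (fun t ht => ⟨by simp [hX], by simpa using ht⟩)
      (fun t h => by rw [← h] at hs1; simp at hs1)
      (fun t _ h => by simpa using (hSb _ h).1)
    have hi := rectInt_inv hs1 hs2 hs3 hs4
    rw [Finset.sum_insert hs]
    simp only [rectInt] at key hi ⊢
    rw [i1, i2, i3, i4]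
    linear_combination key + c s * hi

end

/-! ### The cosecant lattice sum and its differential equation -/

section

open Filter Topology Complex

theorem deriv_zero_of_even {f : ℂ → ℂ} (h : ∀ v, f (-v) = f v) : deriv f 0 = 0 := by
  have h1 := deriv_comp_neg f 0
  simp only [h, neg_zero] at h1
  exact self_eq_neg.mp h1

theorem deriv_even_of_odd {f : ℂ → ℂ} (h : ∀ v, f (-v) = - f v) (v : ℂ) :
    deriv f (-v) = deriv f v := by
  have h1 := deriv_comp_neg f v
  simp only [h, deriv.fun_neg] at h1
  exact (neg_injective h1).symm

theorem deriv_odd_of_even {f : ℂ → ℂ} (h : ∀ v, f (-v) = f v) (v : ℂ) :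
    deriv f (-v) = - deriv f v := by
  have h1 := deriv_comp_neg f v
  simp only [h] at h1
  rw [h1, neg_neg]

theorem analyticAt_dslope {f : ℂ → ℂ} {a : ℂ} (hf : AnalyticAt ℂ f a) :
    AnalyticAt ℂ (dslope f a) a := by
  obtain ⟨p, hp⟩ := hf
  exact hp.has_fpower_series_dslope_fslope.analyticAt

theorem dslope_even_of_odd {f : ℂ → ℂ} (h : ∀ v, f (-v) = - f v) (v : ℂ) :
    dslope f 0 (-v) = dslope f 0 v := by
  by_cases hv : v = 0
  · simp [hv]
  · have h0 : f 0 = 0 := by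
      have := h 0
      rw [neg_zero] at this
      exact self_eq_neg.mp this
    rw [dslope_of_ne _ (neg_ne_zero.mpr hv), dslope_of_ne _ hv, slope_def_field, slope_def_field,
      h, h0]
    simp

theorem deriv_deriv_csc_add {r : ℂ → ℂ} {v : ℂ} (hr : AnalyticAt ℂ r v) (hs : sin v ≠ 0) :
    deriv (deriv fun v => 1 / sin v + r v) v
      = 2 / sin v ^ 3 - 1 / sin v + deriv (deriv r) v := by
  have h1 : ∀ᶠ u in 𝓝 v, deriv (fun v => 1 / sin v + r v) u
      = -cos u / sin u ^ 2 + deriv r u := by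
    have hs' : ∀ᶠ u in 𝓝 v, sin u ≠ 0 := continuous_sin.continuousAt.eventually_ne hs
    filter_upwards [hr.eventually_analyticAt, hs'] with u hu hsu
    have a := ((hasDerivAt_sin u).inv hsu).add hu.differentiableAt.hasDerivAt
    have : (fun v => 1 / sin v + r v) = sin⁻¹ + r := by
      ext; simp
    rw [this, a.deriv]
  rw [EventuallyEq.deriv_eq h1]
  have a := (((hasDerivAt_cos v).neg.div ((hasDerivAt_sin v).pow 2) (pow_ne_zero 2 hs)).add
    hr.deriv.differentiableAt.hasDerivAt).deriv
  have e : (fun u => -cos u / sin u ^ 2 + deriv r u) = (-cos) / sin ^ 2 + deriv r := by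
    ext; simp
  rw [e, a]
  have := Complex.sin_sq_add_cos_sq v
  simp
  field_simp
  linear_combination 2 * this

/-- An odd function `C = 1 / sin + r` with `r` analytic at `0` has `C'' - 2 C³ - B C` regular at
the pole, for a suitable `B`: the terms of order `v⁻³` cancel automatically, `B` cancels those of order
`v⁻¹`, and the value of the regular extension at `0` is `0` by oddness. -/
theorem local_ode {r : ℂ → ℂ} (hr : AnalyticAt ℂ r 0) (hodd : ∀ v, r (-v) = - r v) :
    ∃ (B : ℂ) (G : ℂ → ℂ), AnalyticAt ℂ G 0 ∧ G 0 = 0 ∧ ∀ᶠ v in 𝓝[≠] 0,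
      deriv (deriv fun v => 1 / sin v + r v) v - 2 * (1 / sin v + r v) ^ 3
        - B * (1 / sin v + r v) = G v := by
  have r0 : r 0 = 0 := by
    have := hodd 0
    rw [neg_zero] at this
    exact self_eq_neg.mp this
  have hsin : AnalyticAt ℂ sin 0 := analyticAt_sin
  set σ := dslope sin 0 with hσ
  have σ0 : σ 0 = 1 := by simp [hσ, dslope_same]
  set φ : ℂ → ℂ := fun v => dslope r 0 v / σ v with hφ
  have φe : ∀ v, φ (-v) = φ v := fun v => by
    simp only [hφ, hσ, dslope_even_of_odd hodd, dslope_even_of_odd Complex.sin_neg]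
  have hσa : AnalyticAt ℂ σ 0 := analyticAt_dslope hsin
  have hφa : AnalyticAt ℂ φ 0 := (analyticAt_dslope hr).div hσa (by simp [σ0])
  refine ⟨-1 - 6 * φ 0, fun v => -6 * dslope φ 0 v / σ v + deriv (deriv r) v - 6 * φ v * r v
    - 2 * r v ^ 3 - (-1 - 6 * φ 0) * r v, ?_, ?_, ?_⟩
  · have h1 := analyticAt_dslope hφa
    have h2 := hr.deriv.deriv
    have h3 : AnalyticAt ℂ (fun v => -6 * dslope φ 0 v / σ v) 0 :=
      (analyticAt_const.mul h1).div hσa (by simp [σ0])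
    fun_prop
  · have h1 : deriv (deriv r) 0 = 0 := deriv_zero_of_even (deriv_even_of_odd hodd)
    simp [r0, dslope_same, deriv_zero_of_even φe, h1]
  · have hσ' : ∀ᶠ v in 𝓝[≠] 0, σ v ≠ 0 :=
      (hσa.continuousAt.eventually_ne (by simp [σ0])).filter_mono nhdsWithin_le_nhds
    filter_upwards [hσ', self_mem_nhdsWithin, hr.eventually_analyticAt.filter_mono nhdsWithin_le_nhds]
      with v hv hv0 hrv
    have hv0 : v ≠ 0 := hv0
    have e1 : sin v = v * σ v := by
      simp [hσ, dslope_of_ne _ hv0, slope_def_field]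
      field_simp
    have e2 : r v = v * (φ v * σ v) := by
      simp only [hφ]
      rw [div_mul_cancel₀ _ hv, dslope_of_ne _ hv0, slope_def_field, r0, sub_zero, sub_zero]
      field_simp
    have e3 : dslope φ 0 v = (φ v - φ 0) / v := by
      rw [dslope_of_ne _ hv0, slope_def_field, sub_zero]
    rw [deriv_deriv_csc_add hrv (by rw [e1]; exact mul_ne_zero hv0 hv), e3, e1, e2]
    field_simp
    ring

/-- The lattice sum `∑_{l ∈ ℤ} 1 / sin (v - 2lκ)`. -/
noncomputable def cscSum (κ v : ℂ) : ℂ := ∑' l : ℤ, 1 / sin (v - 2 * l * κ)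

/-- The part of `cscSum` that is regular in the strip `|Im v| < 2 Im κ`. -/
noncomputable def cscReg (κ v : ℂ) : ℂ :=
  ∑' l : ℤ, if l = 0 then 0 else 1 / sin (v - 2 * l * κ)

theorem cscSum_add (κ v : ℂ) : cscSum κ (v + 2 * κ) = cscSum κ v := by
  rw [cscSum, cscSum, ← (Equiv.addRight (1 : ℤ)).tsum_eq]
  congr 1
  ext l
  congr 2
  simp
  ring

theorem cscSum_add_pi (κ v : ℂ) : cscSum κ (v + Real.pi) = - cscSum κ v := by
  rw [cscSum, cscSum, ← tsum_neg]
  congr 1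
  ext l
  rw [show v + Real.pi - 2 * l * κ = (v - 2 * l * κ) + Real.pi by ring, sin_add_pi]
  ring

theorem cscSum_neg (κ v : ℂ) : cscSum κ (-v) = - cscSum κ v := by
  rw [cscSum, cscSum, ← (Equiv.neg ℤ).tsum_eq, ← tsum_neg]
  congr 1
  ext l
  rw [show -v - 2 * ((Equiv.neg ℤ l : ℤ) : ℂ) * κ = -(v - 2 * l * κ) by simp; ring, Complex.sin_neg]
  ring

theorem cscReg_neg (κ v : ℂ) : cscReg κ (-v) = - cscReg κ v := by
  rw [cscReg, cscReg, ← (Equiv.neg ℤ).tsum_eq, ← tsum_neg]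
  congr 1
  ext l
  by_cases h : l = 0
  · simp [h]
  · rw [show -v - 2 * ((Equiv.neg ℤ l : ℤ) : ℂ) * κ = -(v - 2 * l * κ) by simp; ring,
      Complex.sin_neg]
    simp [h]

theorem abs_sinh_im_le (z : ℂ) : |Real.sinh z.im| ≤ ‖sin z‖ := by
  have h : ‖sin z‖ ^ 2 = Real.sin z.re ^ 2 + Real.sinh z.im ^ 2 := by
    rw [← Complex.normSq_eq_norm_sq, Complex.sin_eq, normSq_apply]
    simp [← ofReal_sin, ← ofReal_cos, ← ofReal_sinh, ← ofReal_cosh]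
    have h1 := Real.sin_sq_add_cos_sq z.re
    have h2 := Real.cosh_sq z.im
    linear_combination (Real.sinh z.im ^ 2) * h1 + Real.sin z.re ^ 2 * h2
  apply abs_le_of_sq_le_sq _ (norm_nonneg _)
  rw [h]
  nlinarith [sq_nonneg (Real.sin z.re)]

theorem sinh_add_ge {a b : ℝ} (hb : 0 ≤ b) : Real.exp b * Real.sinh a ≤ Real.sinh (a + b) := by
  rw [Real.sinh_eq, Real.sinh_eq, Real.exp_add, neg_add, Real.exp_add]
  have : Real.exp (-b) ≤ Real.exp b := Real.exp_le_exp.mpr (by linarith)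
  nlinarith [Real.exp_pos (-a)]

theorem summable_exp_natAbs {η : ℝ} (hη : 0 < η) (c : ℝ) :
    Summable fun l : ℤ => Real.exp (-(2 * η * ((l.natAbs : ℝ) - 1))) / c := by
  have h : Summable fun n : ℕ => Real.exp (-(2 * η * ((n : ℝ) - 1))) / c := by
    apply Summable.div_const
    have := (summable_geometric_of_lt_one (Real.exp_pos (-(2 * η))).le
      (by rw [← Real.exp_zero]; exact Real.exp_lt_exp.mpr (by linarith))).mul_left (Real.exp (2 * η))
    refine this.congr fun n => ?_
    rw [← Real.exp_nat_mul, ← Real.exp_add]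
    congr 1
    ring
  exact Summable.of_nat_of_neg (by simpa using h) (by simpa using h)

/-- A bound for the terms `l ≠ 0`, uniform in the strip `|Im v| < R` and summable in `l`. -/
theorem norm_csc_le {κ v : ℂ} (hκ : 0 < κ.im) {R : ℝ} (hR : R < 2 * κ.im) (hv : |v.im| < R)
    {l : ℤ} (hl : l ≠ 0) : 0 < |Real.sinh (v - 2 * l * κ).im| ∧ ‖1 / sin (v - 2 * l * κ)‖
      ≤ Real.exp (-(2 * κ.im * ((l.natAbs : ℝ) - 1))) / Real.sinh (2 * κ.im - R) := by
  set b := 2 * κ.im * ((l.natAbs : ℝ) - 1) with hb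
  have hl1 : (1 : ℝ) ≤ l.natAbs := by
    exact_mod_cast Int.natAbs_pos.mpr hl
  have hb0 : 0 ≤ b := mul_nonneg (by linarith) (by linarith)
  have hs : 0 < Real.sinh (2 * κ.im - R) := Real.sinh_pos_iff.mpr (by linarith)
  have h1 : (2 * κ.im - R) + b ≤ |(v - 2 * l * κ).im| := by
    have e : (v - 2 * l * κ).im = v.im - 2 * l * κ.im := by simp
    have h2 : |2 * (l : ℝ) * κ.im| = 2 * l.natAbs * κ.im := by
      rw [abs_mul, abs_mul, abs_of_pos hκ, ← Int.cast_abs, Int.abs_eq_natAbs]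
      simp
    have h3 := abs_sub_abs_le_abs_sub (2 * (l : ℝ) * κ.im) v.im
    rw [e, abs_sub_comm]
    rw [h2] at h3
    rw [hb]
    linarith
  have h4 : Real.exp b * Real.sinh (2 * κ.im - R) ≤ |Real.sinh (v - 2 * l * κ).im| := by
    refine (sinh_add_ge hb0).trans ?_
    rw [Real.abs_sinh]
    exact Real.sinh_le_sinh.mpr h1
  have h5 : 0 < Real.exp b * Real.sinh (2 * κ.im - R) := by positivity
  refine ⟨h5.trans_le h4, ?_⟩
  rw [norm_div, norm_one, Real.exp_neg, inv_eq_one_div, div_div]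
  exact one_div_le_one_div_of_le h5 (h4.trans (abs_sinh_im_le _))

theorem summable_csc {κ v : ℂ} (hκ : 0 < κ.im) (hv : |v.im| < 2 * κ.im) :
    Summable fun l : ℤ => 1 / sin (v - 2 * l * κ) := by
  obtain ⟨R, h1, h2⟩ := exists_between hv
  refine Summable.of_norm_bounded_eventually (summable_exp_natAbs hκ (Real.sinh (2 * κ.im - R))) ?_
  have : ∀ᶠ l : ℤ in cofinite, l ∉ ({0} : Set ℤ) := (Set.finite_singleton 0).compl_mem_cofinite
  filter_upwards [this] with l hl
  exact (norm_csc_le hκ h2 h1 hl).2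

theorem cscSum_eq {κ v : ℂ} (hκ : 0 < κ.im) (hv : |v.im| < 2 * κ.im) :
    cscSum κ v = 1 / sin v + cscReg κ v := by
  rw [cscSum, (summable_csc hκ hv).tsum_eq_add_tsum_ite 0, cscReg]
  simp

theorem isOpen_strip (R : ℝ) : IsOpen {v : ℂ | |v.im| < R} :=
  isOpen_lt (by fun_prop) continuous_const

/-- A locally uniform limit of analytic functions, by `norm_csc_le`. -/
theorem analyticAt_cscReg {κ v : ℂ} (hκ : 0 < κ.im) (hv : |v.im| < 2 * κ.im) :
    AnalyticAt ℂ (cscReg κ) v := by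
  obtain ⟨R, h1, h2⟩ := exists_between hv
  have := differentiableOn_tsum_of_summable_norm
    (F := fun (l : ℤ) v => if l = 0 then 0 else 1 / sin (v - 2 * l * κ))
    (summable_exp_natAbs hκ (Real.sinh (2 * κ.im - R))) ?_ (isOpen_strip R) ?_
  · exact this.analyticAt ((isOpen_strip R).mem_nhds h1)
  · intro l w hw
    by_cases hl : l = 0
    · simp only [hl, if_true]
      exact differentiableWithinAt_const _
    · simp only [hl, if_false]
      have h3 : sin (w - 2 * l * κ) ≠ 0 := by
        rw [← norm_pos_iff]
        exact (norm_csc_le hκ h2 hw hl).1.trans_le (abs_sinh_im_le _)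
      apply DifferentiableAt.differentiableWithinAt
      exact (differentiableAt_const _).div (by fun_prop) h3
  · intro l w hw
    by_cases hl : l = 0
    · simp only [hl, if_true, norm_zero]
      have : 0 < Real.sinh (2 * κ.im - R) := Real.sinh_pos_iff.mpr (by linarith)
      positivity
    · simp only [hl, if_false]
      exact (norm_csc_le hκ h2 hw hl).2

theorem cscSum_eventuallyEq {κ v : ℂ} (hκ : 0 < κ.im) (hv : |v.im| < 2 * κ.im) :
    cscSum κ =ᶠ[𝓝 v] fun v => 1 / sin v + cscReg κ v := by
  filter_upwards [(isOpen_strip _).mem_nhds hv] with u hu using cscSum_eq hκ hu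

theorem analyticAt_cscSum {κ v : ℂ} (hκ : 0 < κ.im) (hv : |v.im| < 2 * κ.im) (hs : sin v ≠ 0) :
    AnalyticAt ℂ (cscSum κ) v := by
  refine AnalyticAt.congr ?_ (cscSum_eventuallyEq hκ hv).symm
  exact (analyticAt_const.div analyticAt_sin hs).add (analyticAt_cscReg hκ hv)

/-- Every point is a lattice translate of a point in the fundamental rectangle centred at `0`. -/
theorem exists_translate {κ : ℂ} (hκ : 0 < κ.im) (v : ℂ) : ∃ l n : ℤ,
    |(v - l • (2 * κ) - n • (Real.pi : ℂ)).im| ≤ κ.im ∧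
    |(v - l • (2 * κ) - n • (Real.pi : ℂ)).re| ≤ Real.pi / 2 := by
  set l := round (v.im / (2 * κ.im))
  set n := round ((v - l • (2 * κ)).re / Real.pi) with hn
  refine ⟨l, n, ?_, ?_⟩
  · have h := abs_sub_round (v.im / (2 * κ.im))
    have e : (v - l • (2 * κ) - n • (Real.pi : ℂ)).im
        = (v.im / (2 * κ.im) - l) * (2 * κ.im) := by
      simp
      field_simp
    rw [e, abs_mul, abs_of_pos (by linarith : 0 < 2 * κ.im)]
    nlinarith
  · have h := abs_sub_round ((v - l • (2 * κ)).re / Real.pi)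
    have hpi := Real.pi_pos
    have e : (v - l • (2 * κ) - n • (Real.pi : ℂ)).re
        = ((v - l • (2 * κ)).re / Real.pi - n) * Real.pi := by
      rw [sub_mul, div_mul_cancel₀ _ hpi.ne']
      simp
    rw [e, abs_mul, abs_of_pos hpi]
    nlinarith

/-- `cscSum κ` solves the Duffing equation of the Jacobi elliptic functions. The equation holds
at the poles as well, where both sides take the junk value `0`. -/
theorem cscSum_ode {κ : ℂ} (hκ : 0 < κ.im) :
    ∃ B : ℂ, ∀ v, deriv (deriv (cscSum κ)) v = 2 * cscSum κ v ^ 3 + B * cscSum κ v := by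
  have h0 : |(0 : ℂ).im| < 2 * κ.im := by simpa using hκ
  obtain ⟨B, G, hG, hG0, hBG⟩ := local_ode (analyticAt_cscReg hκ h0) (cscReg_neg κ)
  refine ⟨B, ?_⟩
  set E : ℂ → ℂ := fun v => deriv (deriv (cscSum κ)) v - 2 * cscSum κ v ^ 3 - B * cscSum κ v with hE
  -- The defect `E` is entire, and periodic up to sign, so it is bounded and constant; `E 0 = 0`.
  suffices H : ∀ v, E v = 0 by
    intro v
    have := H v
    simp only [hE] at this
    linear_combination this
  have hper : Function.Periodic E (2 * κ) := by
    intro v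
    have e1 : ∀ v, deriv (cscSum κ) (v + 2 * κ) = deriv (cscSum κ) v := fun v => by
      rw [← deriv_comp_add_const]; simp only [cscSum_add]
    have e2 : ∀ v, deriv (deriv (cscSum κ)) (v + 2 * κ) = deriv (deriv (cscSum κ)) v := fun v => by
      rw [← deriv_comp_add_const]; simp only [e1]
    simp only [hE, e2, cscSum_add]
  have hanti : Function.Antiperiodic E Real.pi := by
    intro v
    have e1 : ∀ v, deriv (cscSum κ) (v + Real.pi) = - deriv (cscSum κ) v := fun v => by
      rw [← deriv_comp_add_const]; simp only [cscSum_add_pi, deriv.fun_neg]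
    have e2 : ∀ v, deriv (deriv (cscSum κ)) (v + Real.pi) = - deriv (deriv (cscSum κ)) v :=
      fun v => by
        rw [← deriv_comp_add_const]; simp only [e1, deriv.fun_neg]
    simp only [hE, e2, cscSum_add_pi]
    ring
  have hodd : E 0 = 0 := by
    have e2 := deriv_zero_of_even (deriv_even_of_odd (cscSum_neg κ))
    have e0 : cscSum κ 0 = 0 := by
      have := cscSum_neg κ 0
      rw [neg_zero] at this
      exact self_eq_neg.mp this
    simp [hE, e2, e0]
  have htr : ∀ l n : ℤ, ∃ ε : ℂ, ‖ε‖ = 1 ∧ ∀ v,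
      E v = ε * E (v - l • (2 * κ) - n • (Real.pi : ℂ)) := by
    intro l n
    rcases Int.even_or_odd n with h | h
    · refine ⟨1, by simp, fun v => ?_⟩
      rw [hanti.sub_zsmul_eq, hper.sub_zsmul_eq, Int.negOnePow_even _ h]
      simp
    · refine ⟨-1, by simp, fun v => ?_⟩
      rw [hanti.sub_zsmul_eq, hper.sub_zsmul_eq, Int.negOnePow_odd _ h]
      simp
  have hloc : ∀ v : ℂ, |v.im| ≤ κ.im → |v.re| ≤ Real.pi / 2 → DifferentiableAt ℂ E v := by
    intro v h1 h2
    by_cases hv : v = 0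
    · subst hv
      have : E =ᶠ[𝓝 0] G := by
        have h3 : ∀ᶠ v in 𝓝[≠] 0, E v = G v := by
          have h4 := cscSum_eventuallyEq hκ h0
          have h5 := h4.deriv.deriv
          filter_upwards [hBG, h4.filter_mono nhdsWithin_le_nhds,
            h5.filter_mono nhdsWithin_le_nhds] with v e1 e2 e3
          simp only [hE]
          rw [e3, e2, e1]
        rw [eventually_nhdsWithin_iff] at h3
        filter_upwards [h3] with v hv
        by_cases h : v = 0
        · rw [h, hodd, hG0]
        · exact hv h
      exact (hG.congr this.symm).differentiableAt
    · have hs : sin v ≠ 0 := by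
        intro h
        obtain ⟨n, hn⟩ := Complex.sin_eq_zero_iff.mp h
        apply hv
        have hre : v.re = n * Real.pi := by rw [hn]; simp
        have hn0 : n = 0 := by
          by_contra hne
          have h3 : (1 : ℝ) ≤ |(n : ℝ)| := by exact_mod_cast Int.one_le_abs hne
          rw [hre, abs_mul, abs_of_pos Real.pi_pos] at h2
          nlinarith [Real.pi_pos]
        simp [hn, hn0]
      have ha := analyticAt_cscSum hκ (by linarith) hs
      exact ((ha.deriv.deriv.sub (analyticAt_const.mul (ha.pow 3))).sub
        (analyticAt_const.mul ha)).differentiableAt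
  have hdiff : Differentiable ℂ E := by
    intro v
    obtain ⟨l, n, h1, h2⟩ := exists_translate hκ v
    obtain ⟨ε, -, hε⟩ := htr l n
    have h3 := hloc _ h1 h2
    have h4 : E = fun v => ε * E (v - l • (2 * κ) - n • (Real.pi : ℂ)) := funext hε
    rw [h4]
    refine DifferentiableAt.const_mul ?_ _
    exact h3.fun_comp' v (f := fun v => v - l • (2 * κ) - n • (Real.pi : ℂ)) (by fun_prop)
  have hbdd : Bornology.IsBounded (Set.range E) := by
    have hc : IsCompact (Set.Icc (-(Real.pi / 2)) (Real.pi / 2) ×ℂ Set.Icc (-κ.im) κ.im) :=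
      isCompact_Icc.reProdIm isCompact_Icc
    obtain ⟨M, hM⟩ := hc.exists_bound_of_continuousOn hdiff.continuous.continuousOn
    rw [isBounded_iff_forall_norm_le]
    refine ⟨M, ?_⟩
    rintro _ ⟨v, rfl⟩
    obtain ⟨l, n, h1, h2⟩ := exists_translate hκ v
    obtain ⟨ε, h3, hε⟩ := htr l n
    rw [hε, norm_mul, h3, one_mul]
    exact hM _ (Complex.mem_reProdIm.mpr ⟨abs_le.mp h2, abs_le.mp h1⟩)
  intro v
  rw [hdiff.apply_eq_apply_of_bounded hbdd v 0, hodd]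

end

/-! ### Fourier expansion of the cosecant sum -/

section

open Filter Topology Complex

/-- The geometric series for `1 / sin` in the upper half-plane. -/
theorem hasSum_csc {x : ℂ} (hx : 0 < x.im) :
    HasSum (fun m : ℕ => -2 * I * exp (I * ((2 * m + 1) * x))) (1 / sin x) := by
  have hn : ‖exp (I * (2 * x))‖ < 1 := by
    rw [norm_exp]
    simp
    exact hx
  have h := (hasSum_geometric_of_norm_lt_one hn).mul_left (-2 * I * exp (I * x))
  have hne : (1 - exp (I * (2 * x))) ≠ 0 := by
    intro h
    rw [← sub_eq_zero.mp h] at hn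
    simp at hn
  have e : sin x = (1 - exp (I * (2 * x))) * (I / 2 * exp (-(I * x))) := by
    rw [sin, show exp (-x * I) = exp (-(I * x)) by ring_nf,
      show exp (x * I) = exp (I * (2 * x)) * exp (-(I * x)) by rw [← exp_add]; ring_nf]
    ring
  have e2 : 1 / sin x = -2 * I * exp (I * x) * (1 - exp (I * (2 * x)))⁻¹ := by
    rw [e, exp_neg]
    have := exp_ne_zero (I * x)
    rw [one_div, mul_inv, mul_inv, inv_inv, inv_div, show (2 : ℂ) / I = -2 * I by
      rw [div_I]; ring]
    ring
  rw [e2]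
  refine h.congr_fun fun m => ?_
  rw [mul_assoc (-2 * I), ← exp_nat_mul, ← exp_add]
  ring_nf

theorem norm_exp_I_mul (y : ℂ) : ‖exp (I * y)‖ = Real.exp (-y.im) := by
  rw [norm_exp]
  simp

/-- The Fourier expansion of `cscSum` about its half period `κ`: each cosecant is
expanded in a geometric series, and the absolutely convergent double sum is summed the other way. -/
theorem cscSum_fourier {κ x : ℂ} (hκ : 0 < κ.im) (hx : |x.im| < κ.im) :
    cscSum κ (x - κ) = ∑' m : ℕ, 2 * I * (sin ((2 * m + 1) * x) / sin ((2 * m + 1) * κ)) := by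
  have hx' := abs_lt.mp hx
  set δ := κ.im - |x.im| with hδ
  have hδ0 : 0 < δ := by linarith
  set f : ℕ → ℕ → ℂ := fun m l => 4 * sin ((2 * m + 1) * x) * exp (I * ((2 * m + 1) * ((2 * l + 1) * κ)))
    with hf
  have hf1 : ∀ m l : ℕ, f m l = -2 * I * exp (I * ((2 * m + 1) * ((2 * l + 1) * κ + x)))
      - -2 * I * exp (I * ((2 * m + 1) * ((2 * l + 1) * κ - x))) := by
    intro m l
    simp only [hf]
    rw [mul_add (2 * (m : ℂ) + 1), mul_add I, exp_add, mul_sub (2 * (m : ℂ) + 1), mul_sub I,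
      sub_eq_add_neg (I * _), exp_add, sin, show -((2 * (m : ℂ) + 1) * x) * I
      = -(I * ((2 * m + 1) * x)) by ring, mul_comm _ I]
    ring_nf
  -- row sums give the cosecants, column sums the Lambert series
  have him1 : ∀ l : ℕ, 0 < ((2 * l + 1) * κ + x).im ∧ 0 < ((2 * l + 1) * κ - x).im := by
    intro l
    have : 0 ≤ (l : ℝ) * κ.im := by positivity
    constructor <;> simp <;> nlinarith
  have hrow : ∀ l : ℕ, HasSum (fun m => f m l)
      (1 / sin ((2 * l + 1) * κ + x) - 1 / sin ((2 * l + 1) * κ - x)) := by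
    intro l
    refine ((hasSum_csc (him1 l).1).sub (hasSum_csc (him1 l).2)).congr_fun ?_
    intro m
    rw [hf1]
  have hcol : ∀ m : ℕ, HasSum (fun l => f m l)
      (2 * I * (sin ((2 * m + 1) * x) / sin ((2 * m + 1) * κ))) := by
    intro m
    have h := (hasSum_csc (x := (2 * m + 1) * κ) (by
      simp
      positivity)).mul_left (2 * I * sin ((2 * m + 1) * x))
    have e : (2 * I * (sin ((2 * m + 1) * x) / sin ((2 * m + 1) * κ)))
        = (2 * I * sin ((2 * m + 1) * x)) * (1 / sin ((2 * m + 1) * κ)) := by ring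
    rw [e]
    refine h.congr_fun ?_
    intro l
    simp only [hf]
    rw [show ((2 * (l : ℂ) + 1) * ((2 * m + 1) * κ)) = (2 * m + 1) * ((2 * l + 1) * κ) by ring]
    linear_combination (4 * sin ((2 * m + 1) * x)
      * exp (I * ((2 * m + 1) * ((2 * l + 1) * κ)))) * I_sq
  have hsum : Summable (Function.uncurry f) := by
    have g1 : Summable fun m : ℕ => Real.exp (-δ) ^ m :=
      summable_geometric_of_lt_one (Real.exp_pos _).le
        (by rw [← Real.exp_zero]; exact Real.exp_lt_exp.mpr (by linarith))
    have g2 : Summable fun m : ℕ => Real.exp (-κ.im) ^ m :=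
      summable_geometric_of_lt_one (Real.exp_pos _).le
        (by rw [← Real.exp_zero]; exact Real.exp_lt_exp.mpr (by linarith))
    have g := (g1.mul_of_nonneg g2 (fun _ => by positivity) (fun _ => by positivity)).mul_left 4
    refine Summable.of_norm_bounded g ?_
    rintro ⟨m, l⟩
    simp only [Function.uncurry]
    have key : ∀ y : ℂ, |y.im| ≤ |x.im| →
        ‖-2 * I * exp (I * ((2 * m + 1) * ((2 * l + 1) * κ + y)))‖
          ≤ 2 * (Real.exp (-δ) ^ m * Real.exp (-κ.im) ^ l) := by
      intro y hy
      have hy' := abs_le.mp hy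
      rw [norm_mul, norm_exp_I_mul, ← Real.exp_nat_mul, ← Real.exp_nat_mul, ← Real.exp_add]
      simp only [norm_mul, norm_neg, norm_I, mul_one]
      rw [show ‖(2 : ℂ)‖ = 2 by simp]
      gcongr
      simp
      have h1 : 0 ≤ (l : ℝ) * κ.im := by positivity
      have h2 : 0 ≤ (m : ℝ) * ((l : ℝ) * κ.im) := by positivity
      have h3 : 0 ≤ (m : ℝ) * δ := by positivity
      have h4 : 0 ≤ (m : ℝ) * (y.im + |x.im|) := mul_nonneg (by positivity) (by linarith)
      rw [hδ] at h3 ⊢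
      nlinarith
    rw [hf1, sub_eq_add_neg (((2 * (l : ℂ) + 1)) * κ) x]
    refine (norm_sub_le _ _).trans ?_
    have := key x le_rfl
    have := key (-x) (by simp)
    linarith
  rw [show (fun m : ℕ => 2 * I * (sin ((2 * m + 1) * x) / sin ((2 * m + 1) * κ)))
    = fun m => ∑' l, f m l from funext fun m => (hcol m).tsum_eq.symm, ← hsum.tsum_comm]
  simp only [fun l => (hrow l).tsum_eq]
  have hC := (summable_csc (v := x - κ) hκ (by
    simp only [sub_im, abs_lt]
    constructor <;> linarith)).hasSum.nat_add_neg_add_one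
  rw [cscSum, ← hC.tsum_eq]
  congr 1
  ext l
  rw [show x - κ - 2 * ((l : ℤ) : ℂ) * κ = -((2 * l + 1) * κ - x) by push_cast; ring,
    show x - κ - 2 * ((-((l : ℤ) + 1) : ℤ) : ℂ) * κ = (2 * l + 1) * κ + x by push_cast; ring,
    Complex.sin_neg]
  ring

theorem norm_sin_le (z : ℂ) : ‖sin z‖ ≤ Real.exp |z.im| := by
  rw [sin, norm_div, norm_mul, norm_I, mul_one, show ‖(2 : ℂ)‖ = 2 by simp]
  have h1 : ‖exp (-z * I)‖ ≤ Real.exp |z.im| := by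
    rw [norm_exp]; apply Real.exp_le_exp.mpr; simp [le_abs_self]
  have h2 : ‖exp (z * I)‖ ≤ Real.exp |z.im| := by
    rw [norm_exp]; apply Real.exp_le_exp.mpr; simp [neg_le_abs]
  have := norm_sub_le (exp (-z * I)) (exp (z * I))
  linarith

theorem tendsto_iteratedDeriv_of_locallyUniform {U : Set ℂ} (hU : IsOpen U) {f : ℕ → ℂ → ℂ}
    {g : ℂ → ℂ} (h : TendstoLocallyUniformlyOn f g atTop U) (hf : ∀ n, Differentiable ℂ (f n))
    (j : ℕ) : TendstoLocallyUniformlyOn (fun n => iteratedDeriv j (f n)) (iteratedDeriv j g)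
      atTop U := by
  induction j with
  | zero => simpa using h
  | succ j ih =>
    simp only [iteratedDeriv_succ]
    refine ih.deriv (Eventually.of_forall fun n => ?_) hU
    exact ((hf n).contDiff.differentiable_iteratedDeriv (n := ⊤) j (by exact_mod_cast WithTop.coe_lt_top _)).differentiableOn

/-- Termwise differentiation of the Fourier expansion at `0`. -/
theorem tendsto_iteratedDeriv_cscSum {κ α : ℂ} (hκ : 0 < κ.im) (j : ℕ) :
    Tendsto (fun n : ℕ => ∑ m ∈ Finset.range n, 2 * I / sin ((2 * m + 1) * κ)
        * (((2 * m + 1) * α) ^ j * iteratedDeriv j sin 0)) atTop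
      (𝓝 (iteratedDeriv j (fun u => cscSum κ (α * u - κ)) 0)) := by
  set U : Set ℂ := {u | |(α * u).im| < κ.im / 2} with hU
  have hUo : IsOpen U := isOpen_lt (by fun_prop) continuous_const
  have h0 : (0 : ℂ) ∈ U := by
    simp only [hU, Set.mem_ofPred_eq, mul_zero, zero_im, abs_zero]
    linarith
  set f : ℕ → ℂ → ℂ := fun m u => 2 * I / sin ((2 * m + 1) * κ) * sin (((2 * m + 1) * α) * u) with hf
  have hbound : ∀ m : ℕ, ∀ u ∈ U, ‖f m u‖
      ≤ 2 / Real.sinh κ.im * Real.exp (κ.im / 2) * Real.exp (-κ.im) ^ m := by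
    intro m u hu
    have hu' : |(α * u).im| < κ.im / 2 := hu
    have hs := Real.sinh_pos_iff.mpr hκ
    have hm : (0 : ℝ) ≤ m := by positivity
    have h1 : Real.exp (2 * m * κ.im) * Real.sinh κ.im ≤ ‖sin ((2 * m + 1) * κ)‖ := by
      have h := sinh_add_ge (a := κ.im) (b := 2 * m * κ.im) (by positivity)
      refine h.trans (le_trans ?_ (abs_sinh_im_le _))
      rw [show ((2 * (m : ℂ) + 1) * κ).im = κ.im + 2 * m * κ.im by simp; ring]
      exact le_abs_self _
    have h2 : ‖sin (((2 * m + 1) * α) * u)‖ ≤ Real.exp ((2 * m + 1) * (κ.im / 2)) := by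
      refine (norm_sin_le _).trans (Real.exp_le_exp.mpr ?_)
      rw [show (((2 * (m : ℂ) + 1) * α) * u).im = (2 * m + 1) * (α * u).im by
        rw [mul_assoc, show (2 * (m : ℂ) + 1) = ((2 * m + 1 : ℝ) : ℂ) by push_cast; rfl,
          im_ofReal_mul], abs_mul, abs_of_pos (by positivity : (0 : ℝ) < 2 * m + 1)]
      gcongr
    simp only [hf]
    rw [norm_mul, norm_div, norm_mul, norm_I, mul_one, show ‖(2 : ℂ)‖ = 2 by simp]
    calc _ ≤ 2 / (Real.exp (2 * m * κ.im) * Real.sinh κ.im) * Real.exp ((2 * m + 1) * (κ.im / 2)) := by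
          gcongr
      _ = _ := by
          rw [show (2 * (m : ℝ) + 1) * (κ.im / 2) = 2 * m * κ.im + (κ.im / 2 + m * (-κ.im)) by ring,
            Real.exp_add, Real.exp_add, Real.exp_nat_mul]
          have := Real.exp_pos (2 * m * κ.im)
          field_simp
  have hsum : Summable fun m : ℕ =>
      2 / Real.sinh κ.im * Real.exp (κ.im / 2) * Real.exp (-κ.im) ^ m :=
    (summable_geometric_of_lt_one (Real.exp_pos _).le
        (by rw [← Real.exp_zero]; exact Real.exp_lt_exp.mpr (by linarith))).mul_left _
  have h1 := (tendstoUniformlyOn_tsum_nat hsum hbound).tendstoLocallyUniformlyOn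
  have h2 := tendsto_iteratedDeriv_of_locallyUniform hUo h1 (fun n => by
    simp only [hf]; fun_prop) j
  have h3 := h2.tendsto_at h0
  have e1 : iteratedDeriv j (fun u => ∑' m, f m u) 0
      = iteratedDeriv j (fun u => cscSum κ (α * u - κ)) 0 := by
    apply EventuallyEq.iteratedDeriv_eq
    filter_upwards [hUo.mem_nhds h0] with u hu
    have hu' : |(α * u).im| < κ.im / 2 := hu
    rw [cscSum_fourier hκ (by linarith)]
    congr 1
    ext m
    simp only [hf]
    rw [mul_assoc _ α u]
    ring
  rw [e1] at h3
  refine h3.congr fun n => ?_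
  rw [iteratedDeriv_fun_sum]
  · refine Finset.sum_congr rfl fun m _ => ?_
    simp only [hf]
    rw [iteratedDeriv_const_mul_field, iteratedDeriv_comp_const_mul contDiff_sin]
    simp
  · intro m _
    simp only [hf]
    exact (contDiff_const.mul (contDiff_sin.comp (contDiff_const.mul contDiff_id))).contDiffAt

end

/-! ### Estimates for the moment integrand -/

section

open MeasureTheory Filter Topology Complex

theorem denom_pos {K L : ℝ} (hL : 0 < L) (s : ℝ) : 0 < Real.cos (K * s) + Real.cosh (L * s) := by
  by_cases hs : s = 0
  · simp [hs]
  · have h1 := Real.one_lt_cosh.mpr (mul_ne_zero hL.ne' hs)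
    have h2 := Real.neg_one_le_cos (K * s)
    linarith

theorem integrableOn_moment {K L : ℝ} (hL : 0 < L) (n : ℕ) :
    IntegrableOn (fun s : ℝ => s ^ n / (Real.cos (K * s) + Real.cosh (L * s))) (Set.Ioi 0) := by
  refine integrable_of_isBigO_exp_neg (b := L / 2) (by positivity) ?_ ?_
  · apply Continuous.continuousOn
    exact (by fun_prop : Continuous fun s : ℝ => s ^ n).div₀ (by fun_prop)
      (fun s => (denom_pos hL s).ne')
  · obtain ⟨c, hc⟩ := (isLittleO_pow_exp_pos_mul_atTop n (b := L / 2) (by positivity)).isBigO.bound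
    refine Asymptotics.IsBigO.of_bound (4 * c) ?_
    have h4 : ∀ᶠ s : ℝ in atTop, 4 ≤ Real.exp (L * s) :=
      (Real.tendsto_exp_atTop.comp (tendsto_id.const_mul_atTop hL)).eventually_ge_atTop 4
    filter_upwards [hc, h4] with s h1 h2
    have h3 : Real.exp (L * s) / 4 ≤ Real.cos (K * s) + Real.cosh (L * s) := by
      rw [Real.cosh_eq]
      have := Real.neg_one_le_cos (K * s)
      have := Real.exp_pos (-(L * s))
      linarith
    rw [norm_div, Real.norm_of_nonneg (denom_pos hL s).le, Real.norm_of_nonneg (Real.exp_pos _).le]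
    rw [Real.norm_of_nonneg (Real.exp_pos _).le] at h1
    have h5 : 0 < Real.exp (L * s) / 4 := by positivity
    calc _ ≤ (c * Real.exp (L / 2 * s)) / (Real.exp (L * s) / 4) := by
          apply div_le_div₀ _ h1 h5 h3
          exact (norm_nonneg _).trans h1
      _ = _ := by
          rw [show L * s = L / 2 * s + L / 2 * s by ring, Real.exp_add,
            show -(L / 2) * s = -(L / 2 * s) by ring, Real.exp_neg]
          have := Real.exp_pos (L / 2 * s)
          field_simp

theorem tendsto_pow_div_sinh (n : ℕ) :
    Tendsto (fun x : ℝ => x ^ n / Real.sinh x) atTop (𝓝 0) := by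
  have h1 := Real.tendsto_pow_mul_exp_neg_atTop_nhds_zero n
  have h2 : Tendsto (fun x : ℝ => (1 - Real.exp (-x) * Real.exp (-x)) / 2) atTop
      (𝓝 ((1 - 0 * 0) / 2)) := by
    have := Real.tendsto_exp_neg_atTop_nhds_zero
    exact (tendsto_const_nhds.sub (this.mul this)).div_const 2
  have h3 := h1.div h2 (by norm_num)
  rw [zero_div] at h3
  refine h3.congr fun x => ?_
  simp only [Pi.div_apply]
  have e : Real.sinh x = Real.exp x * ((1 - Real.exp (-x) * Real.exp (-x)) / 2) := by
    rw [Real.sinh_eq, Real.exp_neg]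
    have := Real.exp_pos x
    field_simp
  rw [e, ← div_div, Real.exp_neg]
  rfl

theorem norm_cos_sq (z : ℂ) : ‖cos z‖ ^ 2 = Real.cos z.re ^ 2 + Real.sinh z.im ^ 2 := by
  rw [← Complex.normSq_eq_norm_sq, Complex.cos_eq, normSq_apply]
  simp [← ofReal_sin, ← ofReal_cos, ← ofReal_sinh, ← ofReal_cosh]
  have h1 := Real.sin_sq_add_cos_sq z.re
  have h2 := Real.cosh_sq z.im
  linear_combination (Real.sinh z.im ^ 2) * h1 + Real.cos z.re ^ 2 * h2

/-- The two summands have no common zero: `sinh` vanishes only at `t = 0`, where the cosine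
is `1`. -/
theorem exists_lower_bound {K L : ℝ} (hK : 0 < K) (hL : 0 < L) : ∃ c : ℝ, 0 < c ∧
    ∀ t : ℝ, c ^ 2 ≤ Real.cos (t * L / 2) ^ 2 + Real.sinh (t * K / 2) ^ 2 := by
  have h1 := Real.cos_one_pos
  have h2 : 0 < Real.sinh (K / L) := Real.sinh_pos_iff.mpr (by positivity)
  refine ⟨min (Real.cos 1) (Real.sinh (K / L)), lt_min h1 h2, fun t => ?_⟩
  by_cases ht : |t * L / 2| ≤ 1
  · have h3 : Real.cos 1 ≤ Real.cos (t * L / 2) := by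
      rw [← Real.cos_abs (t * L / 2)]
      exact Real.cos_le_cos_of_nonneg_of_le_pi (abs_nonneg _) (by linarith [Real.pi_gt_three]) ht
    have h4 : min (Real.cos 1) (Real.sinh (K / L)) ≤ Real.cos (t * L / 2) :=
      (min_le_left _ _).trans h3
    have h5 := (lt_min h1 h2).le
    nlinarith [sq_nonneg (Real.sinh (t * K / 2))]
  · push Not at ht
    have h3 : Real.sinh (K / L) ≤ |Real.sinh (t * K / 2)| := by
      rw [Real.abs_sinh]
      apply Real.sinh_le_sinh.mpr
      have : |t * K / 2| = |t * L / 2| * (K / L) := by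
        rw [← abs_of_pos (show 0 < K / L by positivity), ← abs_mul]
        congr 1
        field_simp
      rw [this]
      have h6 : 0 < K / L := by positivity
      nlinarith
    have h4 : min (Real.cos 1) (Real.sinh (K / L)) ≤ |Real.sinh (t * K / 2)| :=
      (min_le_right _ _).trans h3
    have h5 := (lt_min h1 h2).le
    have h7 := sq_abs (Real.sinh (t * K / 2))
    nlinarith [sq_nonneg (Real.cos (t * L / 2))]

/-- For `z` in the first quadrant the first factor has no zero, and the zeros of the second one
are the odd multiples of `π / (K - iL)`. -/
theorem denom_factor (K L : ℝ) (z : ℂ) : cos (K * z) + cosh (L * z)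
    = 2 * cos (z * (K + L * I) / 2) * cos (z * (K - L * I) / 2) := by
  rw [← cos_mul_I, cos_add_cos]
  ring_nf

theorem sinh_le_norm_cos (z : ℂ) : Real.sinh z.im ≤ ‖cos z‖ := by
  apply le_of_sq_le_sq _ (norm_nonneg _)
  rw [norm_cos_sq]
  nlinarith [sq_nonneg (Real.cos z.re)]

theorem cos_conj_ne_zero {K L : ℝ} (hK : 0 < K) (hL : 0 < L) {z : ℂ} (h1 : 0 ≤ z.re)
    (h2 : 0 ≤ z.im) : cos (z * (K + L * I) / 2) ≠ 0 := by
  intro h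
  have h3 := norm_cos_sq (z * (K + L * I) / 2)
  rw [h, norm_zero] at h3
  have e : (z * (K + L * I) / 2).im = (z.re * L + z.im * K) / 2 := by simp
  have e' : (z * (K + L * I) / 2).re = (z.re * K - z.im * L) / 2 := by simp
  have h4 : Real.sinh (z * (K + L * I) / 2).im = 0 := by
    nlinarith [sq_nonneg (Real.sinh (z * (K + L * I) / 2).im),
      sq_nonneg (Real.cos (z * (K + L * I) / 2).re)]
  rw [Real.sinh_eq_zero, e] at h4
  have h5 : z.re = 0 := by nlinarith [mul_nonneg h1 hL.le, mul_nonneg h2 hK.le]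
  have h6 : z.im = 0 := by nlinarith [mul_nonneg h1 hL.le, mul_nonneg h2 hK.le]
  rw [e', e, h5, h6] at h3
  simp at h3

/-- Of the two factors in `denom_factor` one is bounded below by `c`, the other grows like
`sinh`. -/
theorem norm_integrand_le {K L c R t : ℝ} (hc : 0 < c) {z : ℂ} (n : ℕ)
    (h1 : c ^ 2 ≤ ‖cos (z * (K - L * I) / 2)‖ ^ 2) (ht : 0 < t)
    (h2 : t ≤ (z.re * L + z.im * K) / 2) (h3 : ‖z‖ ≤ R) :
    ‖z ^ n / (cos (K * z) + cosh (L * z))‖ ≤ R ^ n / (2 * c * Real.sinh t) := by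
  have e : (z * (K + L * I) / 2).im = (z.re * L + z.im * K) / 2 := by simp
  have h4 : Real.sinh t ≤ ‖cos (z * (K + L * I) / 2)‖ := by
    refine le_trans ?_ (sinh_le_norm_cos _)
    rw [e]
    exact Real.sinh_le_sinh.mpr h2
  have h5 : c ≤ ‖cos (z * (K - L * I) / 2)‖ := le_of_sq_le_sq h1 (norm_nonneg _)
  have hs : 0 < Real.sinh t := Real.sinh_pos_iff.mpr ht
  rw [denom_factor, norm_div, norm_pow, norm_mul, norm_mul, show ‖(2 : ℂ)‖ = 2 by simp]
  have : 2 * c * Real.sinh t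
      ≤ 2 * ‖cos (z * (K + L * I) / 2)‖ * ‖cos (z * (K - L * I) / 2)‖ := by
    rw [mul_right_comm]
    gcongr
  have hR : 0 ≤ R := (norm_nonneg _).trans h3
  gcongr

theorem sub_mul_I_ne_zero {K L : ℝ} (hK : 0 < K) : (K - L * I : ℂ) ≠ 0 := by
  intro h
  have := congrArg Complex.re h
  simp at this
  exact hK.ne' this

theorem pole_eq {K L : ℝ} (hK : 0 < K) (hL : 0 < L) (x : ℝ) :
    (x : ℂ) * (Real.pi / (K - L * I)) = (x * Real.pi * K / (K ^ 2 + L ^ 2) : ℝ)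
      + (x * Real.pi * L / (K ^ 2 + L ^ 2) : ℝ) * I := by
  have h0 := sub_mul_I_ne_zero (L := L) hK
  have h1 : (K ^ 2 + L ^ 2 : ℂ) ≠ 0 := by
    have : (0 : ℝ) < K ^ 2 + L ^ 2 := by positivity
    exact_mod_cast this.ne'
  push_cast
  field_simp
  linear_combination (x * L ^ 2 : ℂ) * I_sq

/-- The integrals over the far sides of the rectangle with corner `2Mπ / (K - iL)` tend to
`0`. The corner lies midway between two consecutive poles, so that `cos (z (K - iL) / 2)` is bounded
away from zero on these sides. -/
theorem right_top_sides {K L : ℝ} (hK : 0 < K) (hL : 0 < L) (n : ℕ) (X Y : ℕ → ℝ)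
    (hX : ∀ M : ℕ, X M = 2 * M * Real.pi * K / (K ^ 2 + L ^ 2))
    (hY : ∀ M : ℕ, Y M = 2 * M * Real.pi * L / (K ^ 2 + L ^ 2)) (f : ℂ → ℂ)
    (hf : ∀ z, f z = z ^ n / (cos (K * z) + cosh (L * z))) :
    Tendsto (fun M => ∫ x in (0 : ℝ)..X M, f (x + Y M * I)) atTop (𝓝 0) ∧
    Tendsto (fun M => ∫ y in (0 : ℝ)..Y M, f (X M + y * I)) atTop (𝓝 0) := by
  obtain ⟨c, hc, hcb⟩ := exists_lower_bound hK hL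
  obtain ⟨d, hd, hdb⟩ := exists_lower_bound hL hK
  have hρ : 0 < K ^ 2 + L ^ 2 := by positivity
  have hpi := Real.pi_pos
  set η := Real.pi * K * L / (K ^ 2 + L ^ 2) with hη
  have hη0 : 0 < η := by positivity
  have hX0 : ∀ M, 0 ≤ X M := fun M => by rw [hX]; positivity
  have hY0 : ∀ M, 0 ≤ Y M := fun M => by rw [hY]; positivity
  have hXL : ∀ M, X M * L / 2 = M * η := fun M => by rw [hX, hη]; field_simp
  have hYK : ∀ M, Y M * K / 2 = M * η := fun M => by rw [hY, hη]; field_simp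
  have hM : ∀ M, (X M * K + Y M * L) / 2 = M * Real.pi := fun M => by
    rw [hX, hY]; field_simp
  have hnorm : ∀ M : ℕ, ∀ z : ℂ, 0 ≤ z.re → z.re ≤ X M → 0 ≤ z.im → z.im ≤ Y M →
      ‖z‖ ≤ X M + Y M := by
    intro M z h1 h2 h3 h4
    refine (norm_le_abs_re_add_abs_im z).trans ?_
    rw [abs_of_nonneg h1, abs_of_nonneg h3]
    linarith
  -- the bounds on both sides are a power of `M` divided by `sinh (M η)`
  have hlim : ∀ C : ℝ, ∀ Z : ℕ → ℝ, (∃ z, ∀ M : ℕ, Z M = z * (M * η)) →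
      Tendsto (fun M => (X M + Y M) ^ n / (2 * C * Real.sinh (M * η)) * |Z M - 0|) atTop (𝓝 0) := by
    rintro C Z ⟨z, hz⟩
    have h1 := (tendsto_pow_div_sinh (n + 1)).comp
      (tendsto_natCast_atTop_atTop.atTop_mul_const hη0)
    have h2 := h1.const_mul ((2 * Real.pi * (K + L) / (K ^ 2 + L ^ 2) / η) ^ n * |z| / (2 * C))
    rw [mul_zero] at h2
    refine h2.congr fun M => ?_
    simp only [Function.comp]
    rw [hz, sub_zero, abs_mul, abs_of_nonneg (show 0 ≤ M * η by positivity)]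
    have e : X M + Y M = (2 * Real.pi * (K + L) / (K ^ 2 + L ^ 2) / η) * (M * η) := by
      rw [hX, hY]
      field_simp
    rw [e]
    generalize 2 * Real.pi * (K + L) / (K ^ 2 + L ^ 2) / η = Q
    rw [mul_pow]
    ring
  constructor
  · rw [tendsto_zero_iff_norm_tendsto_zero]
    refine squeeze_zero' (Eventually.of_forall fun M => norm_nonneg _) ?_ (hlim d X
      ⟨2 / L, fun M => by rw [← hXL]; field_simp⟩)
    filter_upwards [eventually_gt_atTop 0] with M hM0
    apply intervalIntegral.norm_integral_le_of_norm_le_const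
    intro x hx
    rw [Set.uIoc_of_le (hX0 M)] at hx
    rw [hf]
    refine norm_integrand_le hd n ?_ (by positivity) ?_ ?_
    · rw [norm_cos_sq]
      have e1 : ((x + Y M * I) * (K - L * I) / 2 : ℂ).re = M * Real.pi - (X M - x) * K / 2 := by
        rw [← hM]; simp; ring
      have e2 : ((x + Y M * I) * (K - L * I) / 2 : ℂ).im = (X M - x) * L / 2 := by
        have h := (hYK M).trans (hXL M).symm
        simp
        linear_combination 2 * h
      rw [e1, e2, Real.cos_nat_mul_pi_sub, mul_pow, ← pow_mul, mul_comm M, pow_mul]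
      simpa using hdb (X M - x)
    · simp
      have := hYK M
      have : 0 ≤ x * L := mul_nonneg hx.1.le hL.le
      linarith
    · apply hnorm <;> simp [hx.1.le, hx.2, hY0]
  · rw [tendsto_zero_iff_norm_tendsto_zero]
    refine squeeze_zero' (Eventually.of_forall fun M => norm_nonneg _) ?_ (hlim c Y
      ⟨2 / K, fun M => by rw [← hYK]; field_simp⟩)
    filter_upwards [eventually_gt_atTop 0] with M hM0
    apply intervalIntegral.norm_integral_le_of_norm_le_const
    intro y hy
    rw [Set.uIoc_of_le (hY0 M)] at hy
    rw [hf]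
    refine norm_integrand_le hc n ?_ (by positivity) ?_ ?_
    · rw [norm_cos_sq]
      have e1 : ((X M + y * I) * (K - L * I) / 2 : ℂ).re = M * Real.pi - (Y M - y) * L / 2 := by
        rw [← hM]; simp; ring
      have e2 : ((X M + y * I) * (K - L * I) / 2 : ℂ).im = -((Y M - y) * K / 2) := by
        have h := (hYK M).trans (hXL M).symm
        simp
        linear_combination h
      rw [e1, e2, Real.cos_nat_mul_pi_sub, mul_pow, ← pow_mul, mul_comm M, pow_mul]
      simpa using hcb (Y M - y)
    · simp
      have := hXL M
      have : 0 ≤ y * K := mul_nonneg hy.1.le hK.le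
      linarith
    · apply hnorm <;> simp [hy.1.le, hy.2, hX0]

end

/-! ### Residue evaluation of the moments -/

section

open MeasureTheory Filter Topology Complex

theorem pole_props {K L : ℝ} (hK : 0 < K) {s : ℂ} {m : ℕ}
    (hs : s = (2 * m + 1) * (Real.pi / (K - L * I))) :
    cos (K * s) + cosh (L * s) = 0 ∧
    HasDerivAt (fun z => cos (K * z) + cosh (L * z)) (-((K - L * I) * sin (K * s))) s := by
  have hw := sub_mul_I_ne_zero (L := L) hK
  have h1 : L * s * I = K * s - Real.pi - m * (2 * Real.pi) := by
    rw [hs]; field_simp; ring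
  have hc : cosh (L * s) = - cos (K * s) := by
    rw [← cos_mul_I, h1, cos_sub_nat_mul_two_pi, cos_sub_pi]
  have hsn : sinh (L * s) = I * sin (K * s) := by
    have : sin (L * s * I) = - sin (K * s) := by
      rw [h1, sin_sub_nat_mul_two_pi, sin_sub_pi]
    rw [sin_mul_I] at this
    linear_combination (-I) * this + sinh (L * s) * I_sq
  refine ⟨by rw [hc]; ring, ?_⟩
  have d1 := (((hasDerivAt_id s).const_mul (K : ℂ)).ccos).add
    (((hasDerivAt_id s).const_mul (L : ℂ)).ccosh)
  refine (d1.congr_deriv ?_)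
  simp only [id, hsn]
  ring

theorem pole_sin_ne_zero {K L : ℝ} (hK : 0 < K) (hL : 0 < L) {s : ℂ} {m : ℕ}
    (hs : s = (2 * m + 1) * (Real.pi / (K - L * I))) : sin (K * s) ≠ 0 := by
  have e := pole_eq hK hL (2 * m + 1)
  have h1 : (K * s).im = K * ((2 * m + 1) * Real.pi * L / (K ^ 2 + L ^ 2)) := by
    rw [hs, show (2 * m + 1 : ℂ) = ((2 * m + 1 : ℝ) : ℂ) by push_cast; rfl, e, im_ofReal_mul, add_im,
      im_ofReal_mul, ofReal_im]
    simp
  have h2 : 0 < (K * s).im := by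
    rw [h1]
    have := Real.pi_pos
    positivity
  rw [← norm_pos_iff]
  refine lt_of_lt_of_le ?_ (abs_sinh_im_le _)
  exact abs_pos.mpr (Real.sinh_pos_iff.mpr h2).ne.symm

/-- The rectangle contains exactly the first `M` poles, and all of them are simple. -/
theorem rectInt_moment {K L : ℝ} (hK : 0 < K) (hL : 0 < L) (n M : ℕ) :
    rectInt (2 * M * Real.pi * K / (K ^ 2 + L ^ 2)) (2 * M * Real.pi * L / (K ^ 2 + L ^ 2))
      (fun z => z ^ n / (cos (K * z) + cosh (L * z)))
    = -(2 * Real.pi * I / (K - L * I)) * ∑ m ∈ Finset.range M,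
      ((2 * m + 1) * (Real.pi / (K - L * I))) ^ n
        / sin (K * ((2 * m + 1) * (Real.pi / (K - L * I)))) := by
  classical
  have hw := sub_mul_I_ne_zero (L := L) hK
  have hpi := Real.pi_pos
  have hρ : 0 < K ^ 2 + L ^ 2 := by positivity
  set α : ℂ := Real.pi / (K - L * I) with hα
  have hα0 : α ≠ 0 := div_ne_zero (by exact_mod_cast hpi.ne') hw
  set z : ℕ → ℂ := fun m => (2 * m + 1) * α with hz
  have hzinj : Function.Injective z := by
    intro a b h
    have := mul_right_cancel₀ hα0 h
    have h2 : (2 * a + 1 : ℕ) = 2 * b + 1 := by exact_mod_cast this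
    omega
  have hzeq : ∀ x : ℝ, ((x : ℂ) * α).re = x * Real.pi * K / (K ^ 2 + L ^ 2) ∧
      ((x : ℂ) * α).im = x * Real.pi * L / (K ^ 2 + L ^ 2) := by
    intro x
    rw [hα, pole_eq hK hL x]
    exact ⟨by rw [add_re, re_ofReal_mul, ofReal_re]; simp, by rw [add_im, im_ofReal_mul, ofReal_im]; simp⟩
  have hcast : ∀ m : ℕ, z m = ((2 * m + 1 : ℝ) : ℂ) * α := fun m => by
    simp only [hz]; push_cast; rfl
  rw [rectInt_residue (by positivity) (by positivity)
    (fun s => s ^ n / (-((K - L * I) * sin (K * s)))) ((Finset.range M).image z)]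
  · rw [Finset.sum_image (fun a _ b _ h => hzinj h), Finset.mul_sum, Finset.mul_sum]
    refine Finset.sum_congr rfl fun m _ => ?_
    have := pole_sin_ne_zero hK hL (s := z m) (m := m) rfl
    simp only [hz] at this ⊢
    field_simp
  · intro s hs
    obtain ⟨m, hm, rfl⟩ := Finset.mem_image.mp hs
    have hm' : (2 * m + 1 : ℝ) < 2 * M := by
      have := Finset.mem_range.mp hm
      have : 2 * m + 1 < 2 * M := by omega
      exact_mod_cast this
    rw [Complex.mem_reProdIm, hcast, (hzeq _).1, (hzeq _).2]
    refine ⟨⟨by positivity, ?_⟩, ⟨by positivity, ?_⟩⟩ <;> gcongr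
  · rintro s ⟨hs1, hs2⟩
    rw [Complex.mem_reProdIm] at hs1
    obtain ⟨⟨h1, h2⟩, h3, h4⟩ := hs1
    have hD : cos (K * s) + cosh (L * s) ≠ 0 := by
      rw [denom_factor]
      refine mul_ne_zero (mul_ne_zero two_ne_zero (cos_conj_ne_zero hK hL h1 h3)) ?_
      intro h
      obtain ⟨j, hj⟩ := Complex.cos_eq_zero_iff.mp h
      have hsj : s = ((2 * j + 1 : ℝ) : ℂ) * α := by
        rw [hα]
        push_cast
        field_simp
        linear_combination 2 * hj
      have hre : s.re = (2 * j + 1) * (Real.pi * K / (K ^ 2 + L ^ 2)) := by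
        rw [hsj, (hzeq _).1]; ring
      have hpos : 0 < Real.pi * K / (K ^ 2 + L ^ 2) := by positivity
      rw [hre] at h1 h2
      have h5 : (0 : ℝ) ≤ 2 * j + 1 := nonneg_of_mul_nonneg_left h1 hpos
      have h6 : (2 * j + 1 : ℝ) ≤ 2 * M := by
        refine le_of_mul_le_mul_right (h2.trans_eq ?_) hpos
        ring
      have h5' : 0 ≤ 2 * j + 1 := by exact_mod_cast h5
      have h6' : 2 * j + 1 ≤ 2 * M := by exact_mod_cast h6
      apply hs2
      refine Finset.mem_coe.mpr (Finset.mem_image.mpr ⟨j.toNat, Finset.mem_range.mpr (by omega), ?_⟩)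
      have : (j.toNat : ℝ) = j := by
        have := Int.toNat_of_nonneg (show 0 ≤ j by omega)
        exact_mod_cast this
      rw [hcast, hsj, this]
    apply DifferentiableAt.differentiableWithinAt
    exact DifferentiableAt.div (by fun_prop) (by fun_prop) hD
  · intro s hs
    obtain ⟨m, hm, hms⟩ := Finset.mem_image.mp hs
    obtain ⟨p1, p2⟩ := pole_props (L := L) hK hms.symm
    have p3 := pole_sin_ne_zero hK hL hms.symm
    have h1 := (hasDerivAt_iff_tendsto_slope.mp p2).inv₀ (neg_ne_zero.mpr (mul_ne_zero hw p3))
    have h2 : Tendsto (fun z : ℂ => z ^ n) (𝓝[≠] s) (𝓝 (s ^ n)) :=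
      ((continuous_pow n).tendsto s).mono_left nhdsWithin_le_nhds
    refine (h2.mul h1).congr fun u => ?_
    rw [slope_def_field, p1]
    simp only [sub_zero, inv_div]
    ring

/-- Residue evaluation: the moment integral is the limit of sums over the poles on the ray
through `K + iL`. -/
theorem tendsto_moment {K L : ℝ} (hK : 0 < K) (hL : 0 < L) (N : ℕ) :
    Tendsto (fun M : ℕ => -(2 * Real.pi * I / (K - L * I)) * ∑ m ∈ Finset.range M,
      ((2 * m + 1) * (Real.pi / (K - L * I))) ^ (2 * N + 1)
        / sin (K * ((2 * m + 1) * (Real.pi / (K - L * I))))) atTop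
      (𝓝 (((∫ s in Set.Ioi (0 : ℝ), s ^ (2 * N + 1) / (Real.cos (K * s) + Real.cosh (L * s)))
        + (-1) ^ N * ∫ s in Set.Ioi (0 : ℝ),
          s ^ (2 * N + 1) / (Real.cosh (K * s) + Real.cos (L * s)) : ℝ) : ℂ)) := by
  simp only [← rectInt_moment hK hL]
  set f : ℂ → ℂ := fun z => z ^ (2 * N + 1) / (cos (K * z) + cosh (L * z)) with hf
  have hpi := Real.pi_pos
  have hρ : 0 < K ^ 2 + L ^ 2 := by positivity
  obtain ⟨ht, hr⟩ := right_top_sides hK hL (2 * N + 1)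
    (fun M => 2 * M * Real.pi * K / (K ^ 2 + L ^ 2)) (fun M => 2 * M * Real.pi * L / (K ^ 2 + L ^ 2))
    (fun _ => rfl) (fun _ => rfl) f (fun _ => rfl)
  have hXt : ∀ c : ℝ, 0 < c →
      Tendsto (fun M : ℕ => 2 * M * Real.pi * c / (K ^ 2 + L ^ 2)) atTop atTop := by
    intro c hc
    refine (tendsto_natCast_atTop_atTop.atTop_mul_const
      (show 0 < 2 * Real.pi * c / (K ^ 2 + L ^ 2) by positivity)).congr fun M => ?_
    ring
  have hb := (intervalIntegral_tendsto_integral_Ioi 0 (integrableOn_moment (K := K) hL (2 * N + 1))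
    (hXt K hK)).ofReal
  have hl := (intervalIntegral_tendsto_integral_Ioi 0 (integrableOn_moment (K := L) hK (2 * N + 1))
    (hXt L hL)).ofReal
  have hcomb := ((hb.sub ht).add (hr.const_mul I)).add (hl.const_mul ((-1) ^ N))
  rw [mul_zero, sub_zero, add_zero] at hcomb
  simp only [rectInt]
  have e0 : ∀ s : ℝ, Real.cosh (K * s) + Real.cos (L * s) = Real.cos (L * s) + Real.cosh (K * s) :=
    fun s => add_comm _ _
  simp only [e0]
  push_cast
  refine (hcomb.congr fun M => ?_)
  rw [sub_eq_add_neg _ (I * _), ← mul_neg, ← intervalIntegral.integral_neg]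
  congr 1
  · congr 2
    · rw [← intervalIntegral.integral_ofReal]
      simp [hf]
    · push_cast
      rfl
    · push_cast
      rfl
  · rw [← intervalIntegral.integral_ofReal, ← intervalIntegral.integral_const_mul,
      ← intervalIntegral.integral_const_mul]
    congr 1
    ext y
    simp only [hf]
    rw [show (K : ℂ) * (y * I) = K * y * I by ring, show (L : ℂ) * (y * I) = L * y * I by ring,
      cos_mul_I, cosh_mul_I, mul_pow, pow_succ I, pow_mul I, I_sq]
    push_cast
    linear_combination ((-1) ^ N * y ^ (2 * N + 1) / (cosh (K * y) + cos (L * y)) : ℂ) * I_sq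

end

/-! ### Restriction to the real line -/

section

open MeasureTheory Filter Topology Complex

/-- A function with real Taylor coefficients at `0` is real on every symmetric real interval
along which it is analytic, by the identity theorem. -/
theorem real_of_taylor {f : ℂ → ℂ} {T : ℝ} (hT : 0 < T)
    (hf : ∀ x : ℝ, |x| < T → AnalyticAt ℂ f x) (hr : ∀ n, (iteratedDeriv n f 0).im = 0)
    {x : ℝ} (hx : |x| < T) : (f x).im = 0 := by
  have h0 : AnalyticAt ℂ f 0 := by simpa using hf 0 (by simpa using hT)
  have hloc : ∀ᶠ z in 𝓝 (0 : ℂ), z.im = 0 → (f z).im = 0 := by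
    have hp := hasFPowerSeriesAt_iff'.mp h0.hasFPowerSeriesAt
    filter_upwards [hp] with z hz him
    have hzre : z = (z.re : ℂ) := Complex.ext (by simp) (by simp [him])
    refine (hasSum_im hz).unique ?_
    convert hasSum_zero (α := ℝ) (β := ℕ) using 2 with n
    rw [FormalMultilinearSeries.coeff_ofScalars, sub_zero, hzre,
      Complex.ext (z := iteratedDeriv n f 0) (w := ((iteratedDeriv n f 0).re : ℂ)) (by simp)
        (by simp [hr n])]
    rw [smul_eq_mul]
    norm_cast
  have hana : AnalyticOnNhd ℝ (fun x : ℝ => (f x).im) (Set.Ioo (-T) T) := by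
    intro x hx
    have h1 := (hf x (abs_lt.mpr hx)).restrictScalars (𝕜 := ℝ)
    have h2 := h1.comp_of_eq (Complex.ofRealCLM.analyticAt x) rfl
    exact (Complex.imCLM.analyticAt _).comp h2
  have hz := hana.eqOn_zero_of_preconnected_of_eventuallyEq_zero isPreconnected_Ioo
    (show (0 : ℝ) ∈ Set.Ioo (-T) T from ⟨by linarith, hT⟩) (by
      have h3 : Tendsto (fun x : ℝ => (x : ℂ)) (𝓝 0) (𝓝 0) := by
        simpa using (Complex.continuous_ofReal.tendsto 0)
      filter_upwards [h3.eventually hloc] with x hx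
      exact hx (by simp))
  exact hz (abs_lt.mp hx)

/-- The restriction to the real line of a function with real Taylor coefficients satisfying
`f'' = b f + 2 f³`: differentiability, and conservation of energy. -/
theorem ode_real {f : ℂ → ℂ} {T b r : ℝ} (hT : 0 < T)
    (hf : ∀ x : ℝ, |x| < T → AnalyticAt ℂ f x) (hr : ∀ n, (iteratedDeriv n f 0).im = 0)
    (h0 : f 0 = 0) (h1 : deriv f 0 = r)
    (hode : ∀ x : ℝ, |x| < T → deriv (deriv f) x = b * f x + 2 * f x ^ 3) :
    (∀ x : ℝ, |x| < T → HasDerivAt (fun x : ℝ => (f x).re) (deriv f x).re x) ∧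
    ContinuousOn (fun x : ℝ => (deriv f x).re) (Set.Ico 0 T) ∧
    ∀ x : ℝ, |x| < T → (deriv f x).re ^ 2 = r ^ 2 + b * (f x).re ^ 2 + (f x).re ^ 4 := by
  have hfr : ∀ x : ℝ, |x| < T → f x = ((f x).re : ℂ) := fun x hx =>
    Complex.ext (by simp) (by simpa using real_of_taylor hT hf hr hx)
  have hd : ∀ x : ℝ, |x| < T → HasDerivAt (fun x : ℝ => (f x).re) (deriv f x).re x := by
    intro x hx
    exact (hf x hx).differentiableAt.hasDerivAt.real_of_complex
  have hdd : ∀ x : ℝ, |x| < T → HasDerivAt (fun x : ℝ => (deriv f x).re) (deriv (deriv f) x).re x := by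
    intro x hx
    exact (hf x hx).deriv.differentiableAt.hasDerivAt.real_of_complex
  refine ⟨hd, fun x hx => (hdd x ?_).continuousAt.continuousWithinAt, ?_⟩
  · rw [abs_of_nonneg hx.1]; exact hx.2
  intro x hx
  set E : ℝ → ℝ := fun x => (deriv f x).re ^ 2 - b * (f x).re ^ 2 - (f x).re ^ 4 with hE
  have hE' : ∀ x ∈ Set.Ioo (-T) T, HasDerivAt E 0 x := by
    intro x hx
    have hx' := abs_lt.mpr hx
    have e := ((((hdd x hx').pow 2)).sub (((hd x hx').pow 2).const_mul b)).sub ((hd x hx').pow 4)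
    refine e.congr_deriv ?_
    have : (deriv (deriv f) x).re = b * (f x).re + 2 * (f x).re ^ 3 := by
      rw [hode x hx', hfr x hx']
      norm_cast
    rw [this]
    simp
    ring
  have hc := isOpen_Ioo.is_const_of_deriv_eq_zero isPreconnected_Ioo
    (fun x hx => (hE' x hx).differentiableAt.differentiableWithinAt)
    (fun x hx => (hE' x hx).deriv) (abs_lt.mp hx)
    (show (0 : ℝ) ∈ Set.Ioo (-T) T from ⟨by linarith, hT⟩)
  simp [hE, h0, h1] at hc
  linarith

end

/-! ### The generating function of the moments -/

section

open MeasureTheory Filter Topology Complex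

/-- `∫₀^∞ s^(2N+1)/(cos Ks + cosh Ls) ds + (-1)^N ∫₀^∞ s^(2N+1)/(cosh Ks + cos Ls) ds`: the moment
`I_N⁺` after the substitution `x = s²`, for arbitrary `K` and `L`. -/
noncomputable def moment (K L : ℝ) (N : ℕ) : ℝ :=
  (∫ s in Set.Ioi (0 : ℝ), s ^ (2 * N + 1) / (Real.cos (K * s) + Real.cosh (L * s)))
    + (-1) ^ N * ∫ s in Set.Ioi (0 : ℝ), s ^ (2 * N + 1) / (Real.cosh (K * s) + Real.cos (L * s))

/-- `F(u) = -α ∑ₗ 1 / sin(α u - (2l+1) α K)` with `α = π / (K - iL)`. -/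
noncomputable def momentGen (K L : ℝ) (u : ℂ) : ℂ :=
  -(Real.pi / (K - L * I)) *
    cscSum (Real.pi / (K - L * I) * K) (Real.pi / (K - L * I) * u - Real.pi / (K - L * I) * K)

theorem alpha_im {K L : ℝ} (hK : 0 < K) (hL : 0 < L) :
    ((Real.pi / (K - L * I) : ℂ)).re = Real.pi * K / (K ^ 2 + L ^ 2) ∧
    ((Real.pi / (K - L * I) : ℂ)).im = Real.pi * L / (K ^ 2 + L ^ 2) := by
  have e := pole_eq hK hL 1
  rw [ofReal_one, one_mul, one_mul] at e
  rw [e]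
  exact ⟨by rw [add_re, re_ofReal_mul, ofReal_re]; simp,
    by rw [add_im, im_ofReal_mul, ofReal_im]; simp⟩

theorem kappa_im {K L : ℝ} (hK : 0 < K) (hL : 0 < L) :
    ((Real.pi / (K - L * I) * K : ℂ)).im = Real.pi * K * L / (K ^ 2 + L ^ 2) := by
  rw [im_mul_ofReal, (alpha_im hK hL).2]; ring

theorem kappa_im_pos {K L : ℝ} (hK : 0 < K) (hL : 0 < L) :
    0 < ((Real.pi / (K - L * I) * K : ℂ)).im := by
  rw [kappa_im hK hL]
  have := Real.pi_pos
  positivity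

/-- The residue sums of the moment integral and the differentiated Fourier series are the
same sequence, so their limits agree. -/
theorem momentGen_iteratedDeriv_odd {K L : ℝ} (hK : 0 < K) (hL : 0 < L) (N : ℕ) :
    iteratedDeriv (2 * N + 1) (momentGen K L) 0 = (-1) ^ N * moment K L N := by
  have hκ := kappa_im_pos hK hL
  set α : ℂ := Real.pi / (K - L * I) with hα
  have h1 := (tendsto_iteratedDeriv_cscSum (α := α) hκ (2 * N + 1)).const_mul (-α)
  have h2 := (tendsto_moment hK hL N).const_mul ((-1) ^ N)
  rw [← hα] at h2
  have h3 : iteratedDeriv (2 * N + 1) (momentGen K L) 0 =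
      -α * iteratedDeriv (2 * N + 1) (fun u => cscSum (α * K) (α * u - α * K)) 0 :=
    iteratedDeriv_const_mul_field _ _
  rw [h3, moment]
  refine tendsto_nhds_unique h1 (h2.congr fun n => ?_)
  rw [Finset.mul_sum, Finset.mul_sum, Finset.mul_sum]
  refine Finset.sum_congr rfl fun m _ => ?_
  have hs : iteratedDeriv (2 * N + 1) sin (0 : ℂ) = (-1) ^ N := by
    rw [Complex.iteratedDeriv_odd_sin]; simp
  rw [hs, show (2 * Real.pi * I / (K - L * I) : ℂ) = 2 * I * α by rw [hα]; ring,
    show (K : ℂ) * ((2 * m + 1) * α) = (2 * m + 1) * (α * K) by ring]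
  ring

theorem momentGen_iteratedDeriv_even {K L : ℝ} (hK : 0 < K) (hL : 0 < L) (N : ℕ) :
    iteratedDeriv (2 * N) (momentGen K L) 0 = 0 := by
  have hκ := kappa_im_pos hK hL
  set α : ℂ := Real.pi / (K - L * I) with hα
  have h1 := (tendsto_iteratedDeriv_cscSum (α := α) hκ (2 * N)).const_mul (-α)
  have h3 : iteratedDeriv (2 * N) (momentGen K L) 0 =
      -α * iteratedDeriv (2 * N) (fun u => cscSum (α * K) (α * u - α * K)) 0 :=
    iteratedDeriv_const_mul_field _ _
  rw [h3]
  refine tendsto_nhds_unique h1 (tendsto_const_nhds.congr fun n => ?_)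
  have hs : iteratedDeriv (2 * N) sin (0 : ℂ) = 0 := by
    rw [Complex.iteratedDeriv_even_sin]; simp
  simp [hs]

theorem deriv_scaled (g : ℂ → ℂ) (a b d : ℂ) :
    deriv (fun u => d * g (a * u - b)) = fun u => d * a * deriv g (a * u - b) := by
  funext u
  rw [deriv_const_mul_field, deriv_comp_mul_left a (fun x => g (x - b)), deriv_comp_sub_const]
  simp [mul_assoc]

theorem momentGen_ode {K L : ℝ} (hK : 0 < K) (hL : 0 < L) :
    ∃ B : ℂ, ∀ u, deriv (deriv (momentGen K L)) u = B * momentGen K L u + 2 * momentGen K L u ^ 3 := by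
  obtain ⟨B, hB⟩ := cscSum_ode (kappa_im_pos hK hL)
  refine ⟨(Real.pi / (K - L * I)) ^ 2 * B, fun u => ?_⟩
  have h : momentGen K L = fun u => -(Real.pi / (K - L * I)) *
    cscSum (Real.pi / (K - L * I) * K) (Real.pi / (K - L * I) * u - Real.pi / (K - L * I) * K) := rfl
  rw [h, deriv_scaled, deriv_scaled]
  beta_reduce
  rw [hB]
  ring

theorem momentGen_analyticAt {K L : ℝ} (hK : 0 < K) (hL : 0 < L) {u : ℂ}
    (hu : |(Real.pi / (K - L * I) * u : ℂ).im| < (Real.pi / (K - L * I) * K : ℂ).im) :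
    AnalyticAt ℂ (momentGen K L) u := by
  have hκ := kappa_im_pos hK hL
  set α : ℂ := Real.pi / (K - L * I) with hα
  obtain ⟨h1, h2⟩ := abs_lt.mp hu
  have hv : (α * u - α * K).im < 0 := by rw [sub_im]; linarith
  have hs : sin (α * u - α * K) ≠ 0 := by
    rw [← norm_pos_iff]
    refine lt_of_lt_of_le ?_ (abs_sinh_im_le _)
    exact abs_pos.mpr (Real.sinh_neg_iff.mpr hv).ne
  have h3 := analyticAt_cscSum hκ (v := α * u - α * K)
    (by rw [abs_of_neg hv, sub_im]; linarith) hs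
  have h4 : AnalyticAt ℂ (fun u => α * u - α * K) u := by fun_prop
  exact analyticAt_const.mul (h3.comp_of_eq (f := fun u => α * u - α * K) h4 rfl)

theorem momentGen_analyticAt_real {K L : ℝ} (hK : 0 < K) (hL : 0 < L) {x : ℝ} (hx : |x| < K) :
    AnalyticAt ℂ (momentGen K L) x := by
  apply momentGen_analyticAt hK hL
  rw [im_mul_ofReal, im_mul_ofReal, abs_mul, (alpha_im hK hL).2]
  have := Real.pi_pos
  rw [abs_of_pos (by positivity)]
  gcongr

theorem momentGen_analyticAt_imag {K L : ℝ} (hK : 0 < K) (hL : 0 < L) {x : ℝ} (hx : |x| < L) :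
    AnalyticAt ℂ (momentGen K L) (I * x) := by
  apply momentGen_analyticAt hK hL
  rw [← mul_assoc, im_mul_ofReal, im_mul_ofReal, abs_mul, (alpha_im hK hL).2, mul_I_im,
    (alpha_im hK hL).1]
  have := Real.pi_pos
  rw [abs_of_pos (by positivity)]
  calc _ < Real.pi * K / (K ^ 2 + L ^ 2) * L := by gcongr
    _ = _ := by ring

/-- The pole of `cscSum` at `0` is simple with residue `1`. -/
theorem tendsto_mul_cscSum {κ : ℂ} (hκ : 0 < κ.im) :
    Tendsto (fun v => v * cscSum κ v) (𝓝[≠] 0) (𝓝 1) := by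
  have h1 : Tendsto (fun v : ℂ => v / sin v) (𝓝[≠] 0) (𝓝 1) := by
    have := (hasDerivAt_iff_tendsto_slope.mp (Complex.hasDerivAt_sin 0)).inv₀ (by simp)
    rw [cos_zero, inv_one] at this
    refine this.congr fun v => ?_
    rw [slope_def_field]; simp
  have h2 : Tendsto (fun v : ℂ => v * cscReg κ v) (𝓝[≠] 0) (𝓝 0) := by
    have hc := (analyticAt_cscReg hκ (v := 0) (by simpa using hκ)).continuousAt
    have := (continuousAt_id.mul hc).tendsto
    simp only [id, Pi.mul_def, zero_mul] at this
    exact this.mono_left nhdsWithin_le_nhds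
  have h3 := h1.add h2
  rw [add_zero] at h3
  refine h3.congr' ?_
  have : ∀ᶠ v : ℂ in 𝓝 0, |v.im| < 2 * κ.im := by
    have : Continuous fun v : ℂ => |v.im| := by fun_prop
    exact this.continuousAt.eventually_lt_const (by simpa using hκ)
  filter_upwards [nhdsWithin_le_nhds this] with v hv
  rw [cscSum_eq hκ hv]; ring

/-- If `f` has a simple pole with residue `-1` at `T`, stated through the pole of `cscSum` at
`0`, then `Re f` tends to `+∞` from the left. -/
theorem tendsto_atTop_of_simple_pole {f : ℝ → ℂ} {κ c : ℂ} {T : ℝ} (hκ : 0 < κ.im) (hc : c ≠ 0)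
    (hf : ∀ x : ℝ, (T - x) * f x = (c * (x - T)) * cscSum κ (c * (x - T))) :
    Tendsto (fun x => (f x).re) (𝓝[<] T) atTop := by
  have h1 : Tendsto (fun x : ℝ => c * (x - T)) (𝓝[<] T) (𝓝[≠] 0) := by
    refine tendsto_nhdsWithin_iff.mpr ⟨?_, ?_⟩
    · have : Continuous fun x : ℝ => c * ((x : ℂ) - T) := by fun_prop
      have := this.tendsto T
      rw [sub_self, mul_zero] at this
      exact this.mono_left nhdsWithin_le_nhds
    · filter_upwards [self_mem_nhdsWithin] with x hx
      refine mul_ne_zero hc (sub_ne_zero.mpr ?_)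
      exact_mod_cast (ne_of_lt hx)
  have h2 := (tendsto_mul_cscSum hκ).comp h1
  have h3 : Tendsto (fun x : ℝ => (T - x) * (f x).re) (𝓝[<] T) (𝓝 1) := by
    have := (Complex.continuous_re.tendsto 1).comp h2
    rw [one_re] at this
    refine this.congr fun x => ?_
    simp only [Function.comp]
    rw [← hf x, ← ofReal_sub, re_ofReal_mul]
  have h4 : Tendsto (fun x : ℝ => (T - x)⁻¹) (𝓝[<] T) atTop := by
    apply tendsto_inv_nhdsGT_zero.comp
    refine tendsto_nhdsWithin_iff.mpr ⟨?_, ?_⟩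
    · have : Continuous fun x : ℝ => T - x := by fun_prop
      have := this.tendsto T
      rw [sub_self] at this
      exact this.mono_left nhdsWithin_le_nhds
    · filter_upwards [self_mem_nhdsWithin] with x hx
      exact sub_pos.mpr (Set.mem_Iio.mp hx)
  refine (h4.atTop_mul_pos one_pos h3).congr' ?_
  filter_upwards [self_mem_nhdsWithin] with x hx
  have : T - x ≠ 0 := (sub_pos.mpr (Set.mem_Iio.mp hx)).ne'
  field_simp

theorem alpha_ne_zero {K L : ℝ} (hK : 0 < K) : (Real.pi / (K - L * I) : ℂ) ≠ 0 :=
  div_ne_zero (by exact_mod_cast Real.pi_pos.ne') (sub_mul_I_ne_zero hK)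

theorem momentGen_blowup_real {K L : ℝ} (hK : 0 < K) (hL : 0 < L) :
    Tendsto (fun x : ℝ => (momentGen K L x).re) (𝓝[<] K) atTop := by
  refine tendsto_atTop_of_simple_pole (f := fun x => momentGen K L x) (kappa_im_pos hK hL)
    (alpha_ne_zero (L := L) hK) fun x => ?_
  rw [momentGen, ← mul_sub]
  ring

/-- The pole at `iL`; since `α i L = κ - π`, it is a translate of the pole at `K`. -/
theorem momentGen_blowup_imag {K L : ℝ} (hK : 0 < K) (hL : 0 < L) :
    Tendsto (fun x : ℝ => (-I * momentGen K L (I * x)).re) (𝓝[<] L) atTop := by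
  refine tendsto_atTop_of_simple_pole (f := fun x => -I * momentGen K L (I * x))
    (kappa_im_pos hK hL) (mul_ne_zero (alpha_ne_zero (L := L) hK) I_ne_zero) fun x => ?_
  have hw := sub_mul_I_ne_zero (L := L) hK
  have h := cscSum_add_pi (Real.pi / (K - L * I) * K)
    (Real.pi / (K - L * I) * (I * x) - Real.pi / (K - L * I) * K)
  rw [show (Real.pi / (K - L * I) * (I * x) - Real.pi / (K - L * I) * K + Real.pi : ℂ)
    = Real.pi / (K - L * I) * I * (x - L) by field_simp; ring] at h
  rw [h, momentGen]
  ring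

end

/-! ### Determination of the parameters -/

section

open MeasureTheory Filter Topology Complex

theorem moment_zero_pos {K L : ℝ} (hK : 0 < K) (hL : 0 < L) : 0 < moment K L 0 := by
  have key : ∀ {K L : ℝ}, 0 < L →
      0 < ∫ s in Set.Ioi (0 : ℝ), s ^ 1 / (Real.cos (K * s) + Real.cosh (L * s)) := by
    intro K L hL
    have hpos : ∀ s ∈ Set.Ioi (0 : ℝ), 0 < s ^ 1 / (Real.cos (K * s) + Real.cosh (L * s)) :=
      fun s hs => div_pos (pow_pos hs 1) (denom_pos hL s)
    rw [setIntegral_pos_iff_support_of_nonneg_ae _ (integrableOn_moment hL 1)]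
    · rw [Set.inter_eq_right.mpr fun s hs => Function.mem_support.mpr (hpos s hs).ne']
      simp
    · filter_upwards [ae_restrict_mem measurableSet_Ioi] with s hs using (hpos s hs).le
  have h2 := key (K := L) hK
  simp only [moment, mul_zero, zero_add, pow_zero, one_mul]
  simp only [add_comm (Real.cosh _) (Real.cos _)]
  exact add_pos (key hL) h2

/-- Comparison of the blow-up time `T` of the solution with slope `a²` at the origin against `K(k)`.
Rescaling by `y = f / a` brings the first integral to the form `y' ^ 2 = a² (1 + (b / a²) y² + y⁴)`. -/
theorem blowup_compare {f : ℂ → ℂ} {T a b k : ℝ} (hk : k ∈ Set.Ioo (0 : ℝ) 1) (ha : 0 < a)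
    (hT : 0 < T) (hf : ∀ x : ℝ, |x| < T → AnalyticAt ℂ f x)
    (hr : ∀ n, (iteratedDeriv n f 0).im = 0) (h0 : f 0 = 0) (h1 : deriv f 0 = (a ^ 2 : ℝ))
    (hode : ∀ x : ℝ, |x| < T → deriv (deriv f) x = b * f x + 2 * f x ^ 3)
    (hlim : Tendsto (fun x : ℝ => (f x).re) (𝓝[<] T) atTop) :
    (b / a ^ 2 ≤ 2 * (1 - 2 * k ^ 2) → ellipticK k ≤ a * T) ∧
    (2 * (1 - 2 * k ^ 2) ≤ b / a ^ 2 → a * T ≤ ellipticK k) ∧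
    (2 * (1 - 2 * k ^ 2) < b / a ^ 2 → a * T < ellipticK k) := by
  obtain ⟨e1, e2, e3⟩ := ode_real hT hf hr h0 h1 hode
  have hmem : ∀ x ∈ Set.Ico 0 T, |x| < T := fun x hx => by rw [abs_of_nonneg hx.1]; exact hx.2
  have d : ∀ x ∈ Set.Ico 0 T, HasDerivAt (fun x : ℝ => (f x).re / a) ((deriv f x).re / a) x :=
    fun x hx => (e1 x (hmem x hx)).div_const a
  have y0 : (fun x : ℝ => (f x).re / a) 0 = 0 := by simp [h0]
  have hl : Tendsto (fun x : ℝ => (f x).re / a) (𝓝[<] T) atTop := hlim.atTop_div_const ha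
  have ho : ∀ x ∈ Set.Ico 0 T, ((deriv f x).re / a) ^ 2 =
      a ^ 2 * (1 + b / a ^ 2 * ((f x).re / a) ^ 2 + ((f x).re / a) ^ 4) := by
    intro x hx
    rw [div_pow, e3 x (hmem x hx)]
    field_simp
  have hc : ContinuousOn (fun x : ℝ => (deriv f x).re / a) (Set.Ico 0 T) := e2.div_const a
  have hp : 0 < (fun x : ℝ => (deriv f x).re / a) 0 := by
    simp only [ofReal_zero, h1, ofReal_re]; positivity
  exact ⟨fun hb => ellipticK_le_of_blowup hk ha hT d y0 hl ho hb,
    fun hb => (le_ellipticK_of_blowup hk ha hT d y0 hc hp hl ho hb).1,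
    fun hb => (le_ellipticK_of_blowup hk ha hT d y0 hc hp hl ho hb.le).2 hb⟩

theorem iteratedDeriv_scaled (g : ℂ → ℂ) (a d : ℂ) (n : ℕ) :
    iteratedDeriv n (fun u => d * g (a * u)) = fun u => d * a ^ n * iteratedDeriv n g (a * u) := by
  induction n with
  | zero => simp
  | succ n ih =>
    have := deriv_scaled (iteratedDeriv n g) a 0 (d * a ^ n)
    simp only [sub_zero] at this
    rw [iteratedDeriv_succ, ih, this, iteratedDeriv_succ]
    funext u
    ring

/-- The comparison of blow-up times pins down both parameters of the equation. -/
theorem momentGen_params {k : ℝ} (hk : k ∈ Set.Ioo (0 : ℝ) 1) :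
    deriv (momentGen (ellipticK k) (ellipticK √(1 - k ^ 2))) 0 = 1 ∧
    ∀ u, deriv (deriv (momentGen (ellipticK k) (ellipticK √(1 - k ^ 2)))) u =
      2 * (1 - 2 * k ^ 2) * momentGen (ellipticK k) (ellipticK √(1 - k ^ 2)) u
        + 2 * momentGen (ellipticK k) (ellipticK √(1 - k ^ 2)) u ^ 3 := by
  have hk2 : 0 < 1 - k ^ 2 := by nlinarith [hk.1, hk.2]
  have hk' : √(1 - k ^ 2) ∈ Set.Ioo (0 : ℝ) 1 :=
    ⟨Real.sqrt_pos.mpr hk2, (Real.sqrt_lt' one_pos).mpr (by nlinarith [hk.1])⟩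
  have hsq : √(1 - k ^ 2) ^ 2 = 1 - k ^ 2 := Real.sq_sqrt hk2.le
  have hK := ellipticK_pos hk
  have hL := ellipticK_pos hk'
  generalize hKe : ellipticK k = K at *
  generalize hLe : ellipticK √(1 - k ^ 2) = L at *
  set F := momentGen K L with hF
  obtain ⟨B, hB⟩ := momentGen_ode hK hL
  rw [← hF] at hB
  have hodd : ∀ N, iteratedDeriv (2 * N + 1) F 0 = (((-1) ^ N * moment K L N : ℝ) : ℂ) := fun N => by
    rw [hF, momentGen_iteratedDeriv_odd hK hL]; push_cast; rfl
  have heven : ∀ N, iteratedDeriv (2 * N) F 0 = 0 := momentGen_iteratedDeriv_even hK hL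
  have hF0 : F 0 = 0 := by simpa using heven 0
  have hF1 : deriv F 0 = (moment K L 0 : ℂ) := by simpa [iteratedDeriv_one] using hodd 0
  have hm := moment_zero_pos hK hL
  have hana : ∀ x : ℝ, |x| < K → AnalyticAt ℂ F x := fun x hx => momentGen_analyticAt_real hK hL hx
  have hana0 : AnalyticAt ℂ F 0 := by simpa using hana 0 (by simpa using hK)
  -- Differentiating the equation at `0` gives `F'''(0) = B F'(0)`, so `B` is real.
  obtain ⟨b, rfl⟩ : ∃ b : ℝ, B = b := by
    refine ⟨-moment K L 1 / moment K L 0, ?_⟩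
    have h3 := hodd 1
    rw [show 2 * 1 + 1 = 3 from rfl, iteratedDeriv_succ, iteratedDeriv_succ, iteratedDeriv_one,
      funext hB] at h3
    have hd := hana0.differentiableAt.hasDerivAt
    have h4 := ((hd.const_mul B).add ((hd.pow 3).const_mul 2)).deriv
    have h5 : B * deriv F 0 = (((-1) ^ 1 * moment K L 1 : ℝ) : ℂ) := by
      rw [← h3]
      refine Eq.trans ?_ h4.symm
      simp [hF0]
    rw [hF1] at h5
    have hm' : (moment K L 0 : ℂ) ≠ 0 := by exact_mod_cast hm.ne'
    push_cast at h5 ⊢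
    field_simp
    linear_combination h5
  have ha : 0 < √(moment K L 0) := Real.sqrt_pos.mpr hm
  have ha2 : √(moment K L 0) ^ 2 = moment K L 0 := Real.sq_sqrt hm.le
  generalize √(moment K L 0) = a at ha ha2
  have hreal : ∀ n, (iteratedDeriv n F 0).im = 0 := by
    intro n
    obtain ⟨N, rfl | rfl⟩ := Nat.even_or_odd' n
    · rw [heven]; simp
    · rw [hodd, ofReal_im]
  obtain ⟨p1, p2, p3⟩ := blowup_compare (b := b) hk ha hK hana hreal hF0 (by rw [ha2]; exact hF1)
    (fun x _ => hB x) (momentGen_blowup_real hK hL)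
  have g1 : deriv (fun u => -I * F (I * u)) = fun u => deriv F (I * u) := by
    have := deriv_scaled F I 0 (-I)
    simpa using this
  have g2 : ∀ u, deriv (deriv (fun u => -I * F (I * u))) u
      = ((-b : ℝ) : ℂ) * (-I * F (I * u)) + 2 * (-I * F (I * u)) ^ 3 := by
    intro u
    have := deriv_scaled (deriv F) I 0 1
    simp only [sub_zero, one_mul] at this
    rw [g1, this]
    beta_reduce
    rw [hB]
    push_cast
    linear_combination (2 * F (I * u) ^ 3 * I) * I_sq
  -- The rotated function `-i F(i u)` satisfies the same equation with `-b` in place of `b`.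
  obtain ⟨q1, q2, q3⟩ := blowup_compare (f := fun u => -I * F (I * u)) (b := -b) hk' ha hL
    (fun x hx => by
      have h1 := momentGen_analyticAt_imag hK hL hx
      have h2 : AnalyticAt ℂ (fun u : ℂ => I * u) x := by fun_prop
      exact analyticAt_const.mul (h1.comp_of_eq (f := fun u : ℂ => I * u) h2 rfl))
    (fun n => by
      rw [iteratedDeriv_scaled]
      beta_reduce
      rw [mul_zero]
      obtain ⟨N, rfl | rfl⟩ := Nat.even_or_odd' n
      · rw [heven]; simp
      · rw [hodd, pow_succ, pow_mul, I_sq,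
          show -I * ((-1) ^ N * I) = (((-1) ^ N : ℝ) : ℂ) by
            push_cast; linear_combination (-(-1) ^ N : ℂ) * I_sq, ← ofReal_mul, ofReal_im])
    (by simp [hF0]) (by rw [g1, ha2]; simpa using hF1) (fun x _ => g2 x)
    (momentGen_blowup_imag hK hL)
  rw [hsq, show 2 * (1 - 2 * (1 - k ^ 2)) = -(2 * (1 - 2 * k ^ 2)) by ring, neg_div] at q1 q2 q3
  rw [hKe] at p1 p2 p3
  rw [hLe] at q1 q2 q3
  -- A value of `b / a²` too small would give `K ≤ a K` and `a L < L`, one too large `a K < K` and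
  -- `L ≤ a L`; both are contradictory.
  have hab : b / a ^ 2 = 2 * (1 - 2 * k ^ 2) := by
    rcases lt_trichotomy (b / a ^ 2) (2 * (1 - 2 * k ^ 2)) with h | h | h
    · have h1 := p1 h.le
      have h2 := q3 (by linarith)
      nlinarith
    · exact h
    · have h1 := p3 h
      have h2 := q1 (by linarith)
      nlinarith
  have ha1 : a = 1 := by
    have h1 := p1 hab.le
    have h2 := p2 hab.ge
    nlinarith
  have hb : b = 2 * (1 - 2 * k ^ 2) := by rw [← hab, ha1]; simp
  refine ⟨by rw [hF1, ← ha2, ha1]; simp, fun u => ?_⟩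
  rw [hB, hb]
  push_cast
  ring

/-- Conservation of energy in the complex domain. -/
theorem first_integral {f : ℂ → ℂ} (hf : AnalyticAt ℂ f 0) (h0 : f 0 = 0) {B : ℂ}
    (hode : ∀ u, deriv (deriv f) u = B * f u + 2 * f u ^ 3) :
    ∀ᶠ u in 𝓝 0, deriv f u ^ 2 = deriv f 0 ^ 2 + B * f u ^ 2 + f u ^ 4 := by
  obtain ⟨r, hr, hball⟩ := Metric.eventually_nhds_iff_ball.mp hf.eventually_analyticAt
  have hE : ∀ u ∈ Metric.ball (0 : ℂ) r,
      HasDerivAt (fun u => deriv f u ^ 2 - B * f u ^ 2 - f u ^ 4) 0 u := by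
    intro u hu
    have d1 := (hball u hu).differentiableAt.hasDerivAt
    have d2 := (hball u hu).deriv.differentiableAt.hasDerivAt
    refine (((d2.pow 2).sub ((d1.pow 2).const_mul B)).sub (d1.pow 4)).congr_deriv ?_
    rw [hode]
    simp
    ring
  filter_upwards [Metric.ball_mem_nhds (0 : ℂ) hr] with u hu
  have hc := Metric.isOpen_ball.is_const_of_deriv_eq_zero
    (convex_ball (0 : ℂ) r).isPreconnected
    (fun x hx => (hE x hx).differentiableAt.differentiableWithinAt)
    (fun x hx => (hE x hx).deriv) hu (Metric.mem_ball_self hr)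
  simp only [h0] at hc
  linear_combination hc

theorem integral_sqrt_subst (n : ℕ) (D : ℝ → ℝ) :
    (1 / 2) * ∫ x in Set.Ioi (0 : ℝ), x ^ n / D √x = ∫ s in Set.Ioi (0 : ℝ), s ^ (2 * n + 1) / D s := by
  rw [← integral_comp_rpow_Ioi_of_pos (p := 2) two_pos, ← integral_const_mul]
  refine setIntegral_congr_fun measurableSet_Ioi fun s hs => ?_
  have hs' : (0 : ℝ) < s := hs
  simp only [smul_eq_mul]
  rw [show (2 - 1 : ℝ) = 1 by norm_num, Real.rpow_one, Real.rpow_two, Real.sqrt_sq hs'.le]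
  ring

end

/-! ### The congruence for the moments -/

section

open MeasureTheory Filter Topology Complex

theorem Iplus_eq_moment (k : ℝ) (n : ℕ) :
    Iplus k n = moment (ellipticK k) (ellipticK √(1 - k ^ 2)) n := by
  have h1 := integral_sqrt_subst n
    fun s => Real.cos (ellipticK k * s) + Real.cosh (ellipticK √(1 - k ^ 2) * s)
  have h2 := integral_sqrt_subst n
    fun s => Real.cosh (ellipticK k * s) + Real.cos (ellipticK √(1 - k ^ 2) * s)
  rw [Iplus, moment, ← h1, ← h2]
  ring

theorem Iplus_mod_ten_rational_modulus (k : ℝ) (hk : k ∈ Set.Ioo (0 : ℝ) 1)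
    (p q : ℕ) (hp : 0 < p) (hq : 0 < q) (hpq : Nat.Coprime p q)
    (hk2 : 4 * (k ^ 4 - k ^ 2 + 1) = (p : ℝ) / (q : ℝ)) :
    ∀ n : ℕ, ∃ a : ℤ, (q : ℝ) ^ n * Iplus k (2 * n) = (a : ℝ) ∧
      a ≡ (4 * (p : ℤ)) ^ n [ZMOD 10] := by
  intro n
  have hk1 : 0 < 1 - k ^ 2 := by nlinarith [hk.1, hk.2]
  have hK := ellipticK_pos hk
  have hL := ellipticK_pos (k := √(1 - k ^ 2))
    ⟨Real.sqrt_pos.mpr hk1, (Real.sqrt_lt' one_pos).mpr (by nlinarith [hk.1])⟩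
  obtain ⟨h1, hode⟩ := momentGen_params hk
  have hana : AnalyticAt ℂ (momentGen (ellipticK k) (ellipticK √(1 - k ^ 2))) 0 := by
    simpa using momentGen_analyticAt_real hK hL (x := 0) (by simpa using hK)
  have h0 : momentGen (ellipticK k) (ellipticK √(1 - k ^ 2)) 0 = 0 := by
    simpa using momentGen_iteratedDeriv_even hK hL 0
  have hEn := first_integral hana h0 hode
  rw [h1] at hEn
  have hlam : ((q : ℤ) : ℂ) * (1 - 2 * (k : ℂ) ^ 2) ^ 2 = ((p : ℤ) : ℂ) - 3 * ((q : ℤ) : ℂ) := by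
    have hq' : (q : ℝ) ≠ 0 := by exact_mod_cast hq.ne'
    rw [eq_div_iff hq'] at hk2
    have : (q : ℝ) * (1 - 2 * k ^ 2) ^ 2 = p - 3 * q := by linear_combination hk2
    exact_mod_cast this
  obtain ⟨a, ha, hmod⟩ := taylor_mod_ten hana h0 h1 (Eventually.of_forall hode)
    (by simpa using hEn) (p : ℤ) (q : ℤ) hlam n
  refine ⟨a, ?_, hmod⟩
  rw [show 4 * n + 1 = 2 * (2 * n) + 1 by ring, momentGen_iteratedDeriv_odd hK hL,
    ← Iplus_eq_moment, pow_mul, neg_one_sq, one_pow, one_mul] at ha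
  exact_mod_cast ha

end
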